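/- Let n ≥ 3 and let φ:(0,∞)→(0,∞) be a nondecreasing function satisfying ∫_{t_*}^∞ (t/φ(t))^{1/(n−2)} dt < ∞ for some t_* ∈ (0,∞). Then every continuous mapping f ∈ W^{1,φ}_loc possesses the (N)-property with respect to (n−1)-dimensional Hausdorff measure on almost every sphere S centered at a given prescribed point x_0 ∈ ℝ^n (almost every with respect to the radius); moreover, f is locally absolutely continuous on almost all such spheres, and on almost all such spheres S one has H^{n−1}(f(E)) = 0 whenever |∇f| = 0 on the set E ⊂ S. -/

import Mathlib

open MeasureTheory Metric Set Filter
open scoped ENNReal NNReal Topology RealInnerProductSpace Classical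

noncomputable section

abbrev Eucl (n : ℕ) : Type := EuclideanSpace ℝ (Fin n)

/-- A `k`-dimensional surface in `ℝⁿ`: a continuous map defined on an open subset of the
one-point compactification of `ℝᵏ`. -/
structure Surface (n k : ℕ) where
  dom : Set (OnePoint (Eucl k))
  isOpen_dom : IsOpen dom
  toFun : OnePoint (Eucl k) → Eucl n
  continuousOn : ContinuousOn toFun dom

namespace Surface

variable {n k : ℕ}

/-- The multiplicity function `N(S,y)` of a surface. -/
def mult (S : Surface n k) (y : Eucl n) : ℝ≥0∞ :=
  ((S.dom ∩ S.toFun ⁻¹' {y}).encard : ℕ∞)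

/-- The integral `∫_S ρ dA = ∫ ρ(y) N(S,y) dH^k(y)` of `ρ` over the surface `S`. -/
def sint (S : Surface n k) (ρ : Eucl n → ℝ≥0∞) : ℝ≥0∞ :=
  ∫⁻ y, ρ y * S.mult y ∂(μH[(k : ℝ)] : Measure (Eucl n))

end Surface

/-- Admissible functions for a family of `k`-surfaces. -/
def surfAdm {n : ℕ} (k : ℕ) (Γ : Set (Surface n k)) : Set (Eucl n → ℝ≥0∞) :=
  {ρ | Measurable ρ ∧ ∀ S ∈ Γ, 1 ≤ S.sint fun y => ρ y ^ k}

/-- The `p`-modulus of a family of `k`-surfaces. -/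
def surfModulus {n : ℕ} (p : ℝ) (k : ℕ) (Γ : Set (Surface n k)) : ℝ≥0∞ :=
  ⨅ ρ ∈ surfAdm k Γ, ∫⁻ x, ρ x ^ p

/-- Extensively `p`-admissible functions: admissibility may fail on a subfamily of
`p`-modulus zero. -/
def extAdm {n : ℕ} (p : ℝ) (k : ℕ) (Γ : Set (Surface n k)) : Set (Eucl n → ℝ≥0∞) :=
  {ρ | Measurable ρ ∧ surfModulus p k {S ∈ Γ | ¬ 1 ≤ S.sint fun y => ρ y ^ k} = 0}

/-- The family of the (injectively parametrized, nonempty) surfaces `S(x₀,r) ∩ D`,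
`r ∈ I`. -/
def sphereFam {n : ℕ} (D : Set (Eucl n)) (x₀ : Eucl n) (I : Set ℝ) :
    Set (Surface n (n - 1)) :=
  {S | ∃ r ∈ I, S.dom.Nonempty ∧ Set.InjOn S.toFun S.dom ∧
      S.toFun '' S.dom = sphere x₀ r ∩ D}

/-- The image of a family of surfaces under a map `f`. -/
def imageFam {n k : ℕ} (f : Eucl n → Eucl n) (Γ : Set (Surface n k)) :
    Set (Surface n k) :=
  {S' | ∃ S ∈ Γ, S'.dom = S.dom ∧ Set.EqOn S'.toFun (f ∘ S.toFun) S.dom}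

/-- The spherical ring `R(x₀,a,b)`. -/
def ringA {n : ℕ} (x₀ : Eucl n) (a b : ℝ) : Set (Eucl n) :=
  {x | a < dist x x₀ ∧ dist x x₀ < b}

/-- `‖Q‖_α(r) = (∫_{D ∩ S(x₀,r)} Q^α dA)^{1/α}`. -/
def sphNorm {n : ℕ} (D : Set (Eucl n)) (x₀ : Eucl n) (Q : Eucl n → ℝ≥0∞)
    (α : ℝ) (r : ℝ) : ℝ≥0∞ :=
  (∫⁻ x in D ∩ sphere x₀ r, Q x ^ α ∂(μH[((n : ℝ) - 1)] : Measure (Eucl n))) ^ (1 / α)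

/-- `f` is a lower `Q`-homeomorphism w.r.t. the `p`-modulus at `x₀`. -/
def IsLowerQHomeoAt {n : ℕ} (D : Set (Eucl n)) (f : Eucl n → Eucl n)
    (Q : Eucl n → ℝ≥0∞) (p : ℝ) (x₀ : Eucl n) (d₀ : ℝ≥0∞) : Prop :=
  ∀ ε ε₀ : ℝ, 0 < ε → ε < ε₀ → ENNReal.ofReal ε₀ < d₀ →
    (⨅ ρ ∈ extAdm p (n - 1) (sphereFam D x₀ (Ioo ε ε₀)),
        ∫⁻ x in ringA x₀ ε ε₀, ρ x ^ p / Q x) ≤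
      surfModulus p (n - 1) (imageFam f (sphereFam D x₀ (Ioo ε ε₀)))

/-- `f` is a homeomorphism of `D` onto `D'`. -/
structure IsHomeoOn {n : ℕ} (f : Eucl n → Eucl n) (D D' : Set (Eucl n)) : Prop where
  continuousOn : ContinuousOn f D
  injOn : Set.InjOn f D
  image_eq : f '' D = D'
  isOpenMapOn : ∀ U : Set (Eucl n), U ⊆ D → IsOpen U → IsOpen (f '' U)

/-- `Df` is the weak (Sobolev) derivative of `f` on `D`, and `f ∈ W^{1,1}_loc(D)`. -/
def IsWeakDerivOn {n m : ℕ} (D : Set (Eucl n)) (f : Eucl n → Eucl m)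
    (Df : Eucl n → Eucl n →L[ℝ] Eucl m) : Prop :=
  LocallyIntegrableOn f D volume ∧ LocallyIntegrableOn Df D volume ∧
  ∀ ψ : Eucl n → ℝ, ContDiff ℝ (⊤ : ℕ∞) ψ → HasCompactSupport ψ → tsupport ψ ⊆ D →
    ∀ v : Eucl n, ∫ x, ψ x • Df x v = - ∫ x, fderiv ℝ ψ x v • f x

/-- The Frobenius norm `|∇f| = (Σ_{i,j} (∂f_i/∂x_j)²)^{1/2}` of a linear map. -/
def frobNorm {n m : ℕ} (A : Eucl n →L[ℝ] Eucl m) : ℝ :=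
  Real.sqrt (∑ i : Fin m, ∑ j : Fin n, (A (EuclideanSpace.single j 1) i) ^ 2)

/-- The Orlicz–Sobolev class `W^{1,φ}_loc(D)` (with explicit weak derivative `Df`). -/
def MemOrliczSobolevOn {n m : ℕ} (φ : ℝ → ℝ) (D : Set (Eucl n))
    (f : Eucl n → Eucl m) (Df : Eucl n → Eucl n →L[ℝ] Eucl m) : Prop :=
  IsWeakDerivOn D f Df ∧
  ∀ K : Set (Eucl n), K ⊆ D → IsCompact K →
    (∫⁻ x in K, ENNReal.ofReal (φ (frobNorm (Df x)))) < ⊤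

/-- `φ` is nondecreasing and positive on `(0,∞)`. -/
def NondecPos (φ : ℝ → ℝ) : Prop :=
  (∀ s t : ℝ, 0 < s → s ≤ t → φ s ≤ φ t) ∧ ∀ t : ℝ, 0 < t → 0 < φ t

/-- The Calderón-type condition `∫_{t₀}^∞ (t/φ(t))^{1/(n-2)} dt < ∞`. -/
def CalderonCond (n : ℕ) (φ : ℝ → ℝ) : Prop :=
  ∃ t₀ : ℝ, 0 < t₀ ∧
    IntegrableOn (fun t => (t / φ t) ^ (1 / ((n : ℝ) - 2))) (Ioi t₀) volume

/-- `f` (with a.e. derivative `Df`) has finite distortion on `D`. -/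
def HasFiniteDistortionOn {n : ℕ} (D : Set (Eucl n))
    (Df : Eucl n → Eucl n →L[ℝ] Eucl n) : Prop :=
  ∃ K : Eucl n → ℝ, AEMeasurable K (volume.restrict D) ∧
    ∀ᵐ x ∂volume.restrict D, 1 ≤ K x ∧ ‖Df x‖ ^ n ≤ K x * (Df x).det

/-- The distortion `K_p(x,f)` for a map with derivative `Df`. -/
def distortionKp {n : ℕ} (p : ℝ) (Df : Eucl n → Eucl n →L[ℝ] Eucl n)
    (x : Eucl n) : ℝ≥0∞ :=
  if (Df x).det ≠ 0 then ENNReal.ofReal (‖Df x‖ ^ p / (Df x).det)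
  else if Df x = 0 then 1 else ⊤

/-- The multiplicity function of a curve `γ : [0,1] → ℝⁿ`. -/
def curveMult {n : ℕ} (γ : ℝ → Eucl n) (y : Eucl n) : ℝ≥0∞ :=
  (({t ∈ Icc (0:ℝ) 1 | γ t = y}).encard : ℕ∞)

/-- The line integral `∫_γ ρ ds = ∫ ρ(y) N(γ,y) dH¹(y)`. -/
def curveInt {n : ℕ} (γ : ℝ → Eucl n) (ρ : Eucl n → ℝ≥0∞) : ℝ≥0∞ :=
  ∫⁻ y, ρ y * curveMult γ y ∂(μH[(1 : ℝ)] : Measure (Eucl n))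

/-- The family of curves joining `A` and `B` in `G`. -/
def curveJoin {n : ℕ} (A B G : Set (Eucl n)) : Set (ℝ → Eucl n) :=
  {γ | ContinuousOn γ (Icc 0 1) ∧ γ 0 ∈ A ∧ γ 1 ∈ B ∧ Set.MapsTo γ (Icc 0 1) G}

/-- The `q`-modulus of a family of curves. -/
def curveModulus {n : ℕ} (q : ℝ) (Γ : Set (ℝ → Eucl n)) : ℝ≥0∞ :=
  ⨅ ρ ∈ {ρ : Eucl n → ℝ≥0∞ | Measurable ρ ∧ ∀ γ ∈ Γ, 1 ≤ curveInt γ ρ},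
    ∫⁻ x, ρ x ^ q

/-- The `q`-capacity of the condenser `(A,C)`, via the modulus of joining curves. -/
def condenserCap {n : ℕ} (q : ℝ) (A C : Set (Eucl n)) : ℝ≥0∞ :=
  curveModulus q (curveJoin (frontier A) (frontier C) (A \ C))

/-- `L(x₀,f) = limsup_{x→x₀} |f(x)-f(x₀)|/|x-x₀|`. -/
def LAt {n : ℕ} (f : Eucl n → Eucl n) (x₀ : Eucl n) : ℝ≥0∞ :=
  limsup (fun x => edist (f x) (f x₀) / edist x x₀) (𝓝[≠] x₀)

/-- `k_p(x₀) = limsup_{ε→0} (⨍_{B(x₀,ε)} K_p(x,f)^{(n-1)/(p-n+1)} dm)^{(p-n+1)/(n-1)}`. -/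
def kpAt {n : ℕ} (p : ℝ) (Df : Eucl n → Eucl n →L[ℝ] Eucl n) (x₀ : Eucl n) : ℝ≥0∞ :=
  limsup (fun ε : ℝ =>
      ((∫⁻ x in ball x₀ ε, distortionKp p Df x ^ (((n:ℝ)-1)/(p-(n:ℝ)+1))) /
        volume (ball x₀ ε)) ^ ((p-(n:ℝ)+1)/((n:ℝ)-1)))
    (𝓝[>] (0:ℝ))

/-- `f` is absolutely continuous on `S` w.r.t. `d`-dimensional Hausdorff measure. -/
def ACOnSet {n m : ℕ} (f : Eucl n → Eucl m) (S : Set (Eucl n)) (d : ℝ) : Prop :=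
  ∀ ε : ℝ, 0 < ε → ∃ δ : ℝ, 0 < δ ∧ ∀ A : Set (Eucl n), A ⊆ S →
    (μH[d] : Measure (Eucl n)) A < ENNReal.ofReal δ →
      (μH[d] : Measure (Eucl m)) (f '' A) < ENNReal.ofReal ε

/-- `f` is locally absolutely continuous on `S` w.r.t. `H^d`. -/
def LocACOnSet {n m : ℕ} (f : Eucl n → Eucl m) (S : Set (Eucl n)) (d : ℝ) : Prop :=
  ∀ x ∈ S, ∃ V ∈ 𝓝 x, ACOnSet f (S ∩ V) d

/-- The Luzin (N)-property of `f` on `S` w.r.t. `d`-dimensional Hausdorff measure. -/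
def LusinNOn {n m : ℕ} (f : Eucl n → Eucl m) (S : Set (Eucl n)) (d : ℝ) : Prop :=
  ∀ A : Set (Eucl n), A ⊆ S → (μH[d] : Measure (Eucl n)) A = 0 →
    (μH[d] : Measure (Eucl m)) (f '' A) = 0

end

/-!
Locally in gnomonic polar coordinates `(r, w)` about `x₀`, the mollifications of `f` converge to `f`
pointwise, and by Fubini their derivatives converge in `L¹` on almost every slice `r = const`, so
that the slice derivative `D` of `f` is a limit of derivatives of `C¹` maps. Hence the problem is
one about continuous maps `F` of `k = n - 1` variables that are such limits.

For them, integrating derivatives along rays emanating from a point of a ball `B` bounds `diam F(B)`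
by the Lorentz norm `‖D‖_{k,1}` over `B`. The Calderón condition on `φ` is what Hölder's inequality
for the distribution function needs to bound `‖D‖_{k,1} ^ k` by a constant multiple of `∫_B ψ(|D|)`,
where `ψ` is `φ` modified near `0` so that `ψ(0) = 0`. Besicovitch coverings of `A` by small
balls give `H^k(F(A)) ≤ C ∫_A ψ(|D|)`: the right-hand side is absolutely continuous in `A`, and it
vanishes when `D = 0` on `A`.
-/

/-! ### Antitone majorants and Lorentz norms -/

section Weights

theorem exists_antitone_ge {H : ℝ → ℝ≥0∞} (hH : Measurable H) (K : ℝ≥0∞)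
    (hHK : ∀ s t, 0 < t → s ∈ Ioc (t / 2) t → H t ≤ K * H s) :
    ∃ N : ℝ → ℝ≥0∞, Antitone N ∧ (∀ t, 0 < t → H t ≤ N t) ∧
      ∫⁻ t in Ioi (0 : ℝ), N t ≤ 4 * K * ∫⁻ t in Ioi (0 : ℝ), H t := by
  have hmeas : Measurable fun q : ℝ × ℝ ↦
      if q.1 < 2 * q.2 then 2 * K * H q.2 / ENNReal.ofReal q.2 else 0 :=
    Measurable.ite (measurableSet_lt (by fun_prop) (by fun_prop)) (by fun_prop) measurable_const
  refine ⟨fun t ↦ ∫⁻ s in Ioi (0 : ℝ),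
    if t < 2 * s then 2 * K * H s / ENNReal.ofReal s else 0, ?_, fun t ht ↦ ?_, ?_⟩
  · intro t t' htt'
    refine lintegral_mono fun s ↦ ?_
    dsimp only
    split_ifs with h' h
    exacts [le_rfl, absurd (htt'.trans_lt h') h, zero_le, le_rfl]
  · have ht2 : 0 < t / 2 := half_pos ht
    calc H t = ∫⁻ _ in Ioc (t / 2) t, 2 * H t / ENNReal.ofReal t := by
          have h2 : ENNReal.ofReal t = 2 * ENNReal.ofReal (t / 2) := by
            rw [← ENNReal.ofReal_ofNat 2, ← ENNReal.ofReal_mul zero_le_two,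
              mul_div_cancel₀ t two_ne_zero]
          rw [setLIntegral_const, Real.volume_Ioc, sub_half, h2,
            ENNReal.mul_div_mul_left _ _ two_ne_zero ENNReal.ofNat_ne_top,
            ENNReal.div_mul_cancel (by simpa using ht2) ENNReal.ofReal_ne_top]
      _ ≤ ∫⁻ s in Ioc (t / 2) t,
            if t < 2 * s then 2 * K * H s / ENNReal.ofReal s else 0 := by
          refine setLIntegral_mono' measurableSet_Ioc fun s hs ↦ ?_
          rw [if_pos (by linarith [hs.1]), mul_assoc]
          exact ENNReal.div_le_div (by gcongr; exact hHK s t ht hs) (ENNReal.ofReal_le_ofReal hs.2)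
      _ ≤ _ := lintegral_mono_set (Ioc_subset_Ioi_self.trans (Ioi_subset_Ioi ht2.le))
  · have hinner : ∀ s ∈ Ioi (0 : ℝ), ∫⁻ t in Ioi (0 : ℝ),
        (if t < 2 * s then 2 * K * H s / ENNReal.ofReal s else 0) = 4 * K * H s := by
      intro s hs
      have hs0 : ENNReal.ofReal s ≠ 0 := by simpa using hs
      change ∫⁻ t in Ioi (0 : ℝ), (Iio (2 * s)).indicator (fun _ ↦ _) t = _
      rw [lintegral_indicator measurableSet_Iio, setLIntegral_const,
        Measure.restrict_apply measurableSet_Iio, Iio_inter_Ioi, Real.volume_Ioo, sub_zero,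
        ENNReal.ofReal_mul zero_le_two, ENNReal.ofReal_ofNat, mul_left_comm,
        ENNReal.div_mul_cancel hs0 ENNReal.ofReal_ne_top]
      ring
    rw [lintegral_lintegral_swap hmeas.aemeasurable,
      setLIntegral_congr_fun measurableSet_Ioi hinner, lintegral_const_mul _ hH]

theorem ne_top_of_antitone_of_lintegral_ne_top {N : ℝ → ℝ≥0∞} (hN : Antitone N)
    (hint : ∫⁻ t in Ioi (0 : ℝ), N t ≠ ⊤) {t : ℝ} (ht : 0 < t) : N t ≠ ⊤ := by
  have hle : N t * ENNReal.ofReal t ≤ ∫⁻ s in Ioi (0 : ℝ), N s :=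
    calc N t * ENNReal.ofReal t = ∫⁻ _ in Ioc 0 t, N t := by
          rw [setLIntegral_const, Real.volume_Ioc, sub_zero]
      _ ≤ ∫⁻ s in Ioc 0 t, N s := setLIntegral_mono' measurableSet_Ioc fun s hs ↦ hN hs.2
      _ ≤ _ := lintegral_mono_set Ioc_subset_Ioi_self
  exact (ENNReal.lt_top_of_mul_ne_top_left (ne_top_of_le_ne_top hint hle) (by simpa using ht)).ne

end Weights

section LorentzNorm

variable {α : Type*} [MeasurableSpace α] {μ : Measure α}
  {E F : Type*} [NormedAddCommGroup E] [NormedAddCommGroup F] {q : ℝ}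

/-- The Lorentz `L^{q,1}` quasinorm, in the layer-cake normalization
`∫₀^∞ μ{‖f‖ > s}^{1/q} ds`. -/
noncomputable def lorentzNorm (q : ℝ) (f : α → E) (μ : Measure α) : ℝ≥0∞ :=
  ∫⁻ s in Ioi (0 : ℝ), μ {x | s < ‖f x‖} ^ (1 / q)

theorem measurable_meas_lt_norm (f : α → E) (μ : Measure α) :
    Measurable fun s : ℝ ↦ μ {x | s < ‖f x‖} :=
  Antitone.measurable fun _ _ hst ↦ measure_mono fun _ hx ↦ lt_of_le_of_lt hst hx

theorem lorentzNorm_le_mul {f : α → E} {g : α → F} {c : ℝ≥0} (hq : 0 < q)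
    (hfg : ∀ᵐ x ∂μ, ‖f x‖ ≤ c * ‖g x‖) : lorentzNorm q f μ ≤ c * lorentzNorm q g μ := by
  rcases eq_or_ne c 0 with rfl | hc
  · have hzero : ∀ s ∈ Ioi (0 : ℝ), μ {x | s < ‖f x‖} ^ (1 / q) = 0 := fun s hs ↦ by
      have hnull : μ {x | s < ‖f x‖} = 0 := measure_eq_zero_iff_ae_notMem.2 <| by
        filter_upwards [hfg] with x hx
        simp only [NNReal.coe_zero, zero_mul] at hx
        exact not_lt.2 (hx.trans (le_of_lt hs))
      rw [hnull, ENNReal.zero_rpow_of_pos (by positivity)]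
    rw [lorentzNorm, setLIntegral_congr_fun measurableSet_Ioi hzero]
    simp
  have hc' : (0 : ℝ) < c := by positivity
  have hscale : Measure.map (fun s : ℝ ↦ (c : ℝ) * s) (volume.restrict (Ioi 0)) =
      ENNReal.ofReal (c : ℝ)⁻¹ • volume.restrict (Ioi 0) := by
    have hpre : (fun s : ℝ ↦ (c : ℝ) * s) ⁻¹' Ioi 0 = Ioi 0 := by
      ext s; simp [hc']
    have hmap := Real.map_volume_mul_left hc'.ne'
    rw [← hpre, ← Measure.restrict_map (by fun_prop) measurableSet_Ioi, hmap,
      Measure.restrict_smul, abs_of_pos (by positivity), hpre]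
  calc lorentzNorm q f μ = c * ∫⁻ s in Ioi (0 : ℝ), μ {x | c * s < ‖f x‖} ^ (1 / q) := by
        rw [← lintegral_map (f := fun s ↦ μ {x | s < ‖f x‖} ^ (1 / q))
          ((measurable_meas_lt_norm f μ).pow_const _) (by fun_prop), hscale, lintegral_smul_measure,
          smul_eq_mul, ← mul_assoc, ENNReal.ofReal_inv_of_pos hc', ENNReal.ofReal_coe_nnreal,
          ENNReal.mul_inv_cancel (by simpa using hc) ENNReal.coe_ne_top, one_mul, lorentzNorm]
    _ ≤ c * lorentzNorm q g μ := by
        refine mul_le_mul_right (lintegral_mono fun s ↦ ?_) _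
        refine ENNReal.rpow_le_rpow (measure_mono_ae ?_) (by positivity)
        filter_upwards [hfg] with x hx hs
        exact lt_of_mul_lt_mul_left (lt_of_lt_of_le hs hx) hc'.le

theorem lintegral_meas_lt_mul_le_of_monotone [SFinite μ] {f : α → E} (hf : StronglyMeasurable f)
    {W : ℝ → ℝ≥0∞} (hW : Monotone W) :
    ∫⁻ s in Ioi (0 : ℝ), μ {x | s < ‖f x‖} * W s ≤
      ∫⁻ x, ENNReal.ofReal ‖f x‖ * W ‖f x‖ ∂μ := by
  have hlt : MeasurableSet {p : ℝ × α | p.1 < ‖f p.2‖} :=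
    measurableSet_lt measurable_fst (hf.norm.measurable.comp measurable_snd)
  have hmeas : Measurable fun p : ℝ × α ↦ if p.1 < ‖f p.2‖ then W p.1 else 0 :=
    Measurable.ite hlt (hW.measurable.comp measurable_fst) measurable_const
  have hlayer : ∀ s, μ {x | s < ‖f x‖} * W s = ∫⁻ x, (if s < ‖f x‖ then W s else 0) ∂μ := by
    intro s
    change _ = ∫⁻ x, {x | s < ‖f x‖}.indicator (fun _ ↦ W s) x ∂μ
    rw [lintegral_indicator (measurableSet_lt measurable_const hf.norm.measurable),
      setLIntegral_const, mul_comm]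
  simp_rw [hlayer]
  rw [lintegral_lintegral_swap hmeas.aemeasurable]
  refine lintegral_mono fun x ↦ ?_
  change ∫⁻ s in Ioi (0 : ℝ), (Iio ‖f x‖).indicator (fun s ↦ W s) s ≤ _
  rw [setLIntegral_indicator measurableSet_Iio, Iio_inter_Ioi]
  calc ∫⁻ s in Ioo 0 ‖f x‖, W s ≤ ∫⁻ _ in Ioo 0 ‖f x‖, W ‖f x‖ :=
        setLIntegral_mono' measurableSet_Ioo fun s hs ↦ hW hs.2.le
    _ = ENNReal.ofReal ‖f x‖ * W ‖f x‖ := by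
        rw [setLIntegral_const, Real.volume_Ioo, sub_zero, mul_comm]

/-- Hölder's inequality applied to
`μ{‖f‖ > s}^{1/q} = (μ{‖f‖ > s} N(s)^{-(q-1)})^{1/q} · N(s)^{1-1/q}`. -/
theorem lorentzNorm_rpow_le_of_antitone [SFinite μ] (hq : 1 < q) {N : ℝ → ℝ≥0∞} (hN : Antitone N)
    (hN0 : ∀ t, 0 < t → N t ≠ 0) (hN_top : ∀ t, 0 < t → N t ≠ ⊤) {f : α → E}
    (hf : StronglyMeasurable f) :
    lorentzNorm q f μ ^ q ≤
      (∫⁻ t in Ioi (0 : ℝ), N t) ^ (q - 1) *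
        ∫⁻ x, ENNReal.ofReal ‖f x‖ * N ‖f x‖ ^ (-(q - 1)) ∂μ := by
  have hq0 : 0 < q := one_pos.trans hq
  have hq1 : 0 < q - 1 := sub_pos.2 hq
  have hNm : Measurable N := hN.measurable
  have hsplit : ∀ s ∈ Ioi (0 : ℝ), μ {x | s < ‖f x‖} ^ (1 / q) =
      (μ {x | s < ‖f x‖} * N s ^ (-(q - 1))) ^ (1 / q) * N s ^ ((q - 1) / q) := fun s hs ↦ by
    rw [ENNReal.mul_rpow_of_nonneg _ _ (by positivity), ← ENNReal.rpow_mul, mul_assoc,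
      ← ENNReal.rpow_add _ _ (hN0 s hs) (hN_top s hs),
      show -(q - 1) * (1 / q) + (q - 1) / q = 0 by ring, ENNReal.rpow_zero, mul_one]
  have hholder := ENNReal.lintegral_mul_le_Lp_mul_Lq (volume.restrict (Ioi (0 : ℝ)))
    (Real.HolderConjugate.conjExponent hq)
    (f := fun s ↦ (μ {x | s < ‖f x‖} * N s ^ (-(q - 1))) ^ (1 / q))
    (g := fun s ↦ N s ^ ((q - 1) / q))
    (((measurable_meas_lt_norm f μ).mul (hNm.pow_const _)).pow_const _).aemeasurable
    (hNm.pow_const _).aemeasurable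
  have hWmono : Monotone fun s ↦ N s ^ (-(q - 1)) := by
    intro s t hst
    simpa only [ENNReal.rpow_neg] using ENNReal.inv_le_inv.2 (ENNReal.rpow_le_rpow (hN hst) hq1.le)
  calc lorentzNorm q f μ ^ q
      ≤ ((∫⁻ s in Ioi (0 : ℝ), μ {x | s < ‖f x‖} * N s ^ (-(q - 1))) ^ (1 / q) *
          (∫⁻ t in Ioi (0 : ℝ), N t) ^ ((q - 1) / q)) ^ q := by
        rw [lorentzNorm, setLIntegral_congr_fun measurableSet_Ioi hsplit]
        simp only [Pi.mul_apply, Real.conjExponent, ← ENNReal.rpow_mul,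
          one_div_mul_cancel hq0.ne', one_div_div, div_mul_div_cancel₀ hq0.ne',
          div_self hq1.ne', ENNReal.rpow_one] at hholder
        gcongr
    _ = (∫⁻ t in Ioi (0 : ℝ), N t) ^ (q - 1) *
          ∫⁻ s in Ioi (0 : ℝ), μ {x | s < ‖f x‖} * N s ^ (-(q - 1)) := by
        rw [ENNReal.mul_rpow_of_nonneg _ _ hq0.le, ← ENNReal.rpow_mul, ← ENNReal.rpow_mul,
          one_div_mul_cancel hq0.ne', div_mul_cancel₀ _ hq0.ne', ENNReal.rpow_one, mul_comm]
    _ ≤ _ := by gcongr; exact lintegral_meas_lt_mul_le_of_monotone hf hWmono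

/-- The constant relating the Lorentz norm to the Orlicz integral of a weight `ψ`, built on the
Calderón integral `∫₀^∞ (t/ψ(t))^{1/(q-1)} dt`. -/
noncomputable def calderonConst (q : ℝ) (ψ : ℝ → ℝ≥0∞) : ℝ≥0∞ :=
  (4 * 2 ^ (1 / (q - 1)) *
    ∫⁻ t in Ioi (0 : ℝ), (ENNReal.ofReal t / ψ t) ^ (1 / (q - 1))) ^ (q - 1)

theorem lorentzNorm_rpow_le [SFinite μ] (hq : 1 < q) {ψ : ℝ → ℝ≥0∞} (hψ : Monotone ψ)
    (hψ_top : ∀ t, 0 < t → ψ t ≠ ⊤)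
    (hint : ∫⁻ t in Ioi (0 : ℝ), (ENNReal.ofReal t / ψ t) ^ (1 / (q - 1)) ≠ ⊤) {f : α → E}
    (hf : StronglyMeasurable f) :
    lorentzNorm q f μ ^ q ≤ calderonConst q ψ * ∫⁻ x, ψ ‖f x‖ ∂μ := by
  have hq1 : 0 < q - 1 := sub_pos.2 hq
  set H : ℝ → ℝ≥0∞ := fun t ↦ (ENNReal.ofReal t / ψ t) ^ (1 / (q - 1)) with hH
  have hHm : Measurable H := by
    have := hψ.measurable
    fun_prop
  have hdouble : ∀ s t, 0 < t → s ∈ Ioc (t / 2) t → H t ≤ 2 ^ (1 / (q - 1)) * H s := by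
    intro s t _ hs
    rw [hH, ← ENNReal.mul_rpow_of_nonneg _ _ (by positivity), ← mul_div_assoc]
    refine ENNReal.rpow_le_rpow (ENNReal.div_le_div ?_ (hψ hs.2)) (by positivity)
    rw [← ENNReal.ofReal_ofNat 2, ← ENNReal.ofReal_mul zero_le_two]
    exact ENNReal.ofReal_le_ofReal (by linarith [hs.1])
  obtain ⟨N, hN, hHN, hN_int⟩ := exists_antitone_ge hHm _ hdouble
  have hN_int_top : ∫⁻ t in Ioi (0 : ℝ), N t ≠ ⊤ :=
    ne_top_of_le_ne_top (ENNReal.mul_ne_top (by finiteness) hint) hN_int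
  have hN0 : ∀ t, 0 < t → N t ≠ 0 := fun t ht hNt ↦ by
    have hle := hHN t ht
    simp only [hNt, hH, nonpos_iff_eq_zero, ENNReal.rpow_eq_zero_iff_of_pos (one_div_pos.2 hq1),
      ENNReal.div_eq_zero_iff, ENNReal.ofReal_eq_zero, hψ_top t ht, or_false] at hle
    exact hle.not_gt ht
  have hNψ : ∀ t, 0 ≤ t → ENNReal.ofReal t * N t ^ (-(q - 1)) ≤ ψ t := by
    intro t ht
    rcases ht.eq_or_lt with rfl | ht
    · simp
    calc ENNReal.ofReal t * N t ^ (-(q - 1)) ≤ ENNReal.ofReal t * H t ^ (-(q - 1)) := by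
          simp only [ENNReal.rpow_neg]
          gcongr
          exact hHN t ht
      _ = ψ t := by
          rw [hH, ← ENNReal.rpow_mul, mul_neg, one_div_mul_cancel hq1.ne', ENNReal.rpow_neg_one,
            ENNReal.inv_div (.inr ENNReal.ofReal_ne_top) (.inr (by simpa using ht)),
            ENNReal.mul_div_cancel (by simpa using ht) ENNReal.ofReal_ne_top]
  calc lorentzNorm q f μ ^ q ≤ _ :=
        lorentzNorm_rpow_le_of_antitone hq hN hN0
          (fun _ ↦ ne_top_of_antitone_of_lintegral_ne_top hN hN_int_top) hf
    _ ≤ _ := mul_le_mul' (ENNReal.rpow_le_rpow hN_int hq1.le)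
        (lintegral_mono fun x ↦ hNψ _ (norm_nonneg _))

end LorentzNorm

section TruncWeight

variable {φ : ℝ → ℝ} {t₀ : ℝ}

/-- The Orlicz function `φ` made constant on `(0, t₀]` and extended by zero to `(-∞, 0]`: the
Calderón integral of `φ` over `(t₀, ∞)` controls that of `truncWeight φ t₀` over `(0, ∞)`. -/
noncomputable def truncWeight (φ : ℝ → ℝ) (t₀ : ℝ) : ℝ → ℝ≥0∞ :=
  (Ioi 0).indicator fun t ↦ ENNReal.ofReal (φ (max t t₀))

theorem truncWeight_of_pos {t : ℝ} (ht : 0 < t) :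
    truncWeight φ t₀ t = ENNReal.ofReal (φ (max t t₀)) :=
  indicator_of_mem ht _

@[simp]
theorem truncWeight_zero : truncWeight φ t₀ 0 = 0 :=
  indicator_of_notMem self_notMem_Ioi _

theorem truncWeight_ne_top (t : ℝ) : truncWeight φ t₀ t ≠ ⊤ := by
  by_cases ht : t ∈ Ioi (0 : ℝ) <;> simp [truncWeight, ht]

theorem truncWeight_monotone (hφ : NondecPos φ) : Monotone (truncWeight φ t₀) := by
  intro s t hst
  by_cases hs : s ∈ Ioi (0 : ℝ)
  · rw [truncWeight_of_pos hs, truncWeight_of_pos (lt_of_lt_of_le hs hst)]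
    exact ENNReal.ofReal_le_ofReal (hφ.1 _ _ (lt_max_of_lt_left hs) (max_le_max_right _ hst))
  · rw [truncWeight, indicator_of_notMem hs]
    exact zero_le

theorem truncWeight_le_add (t : ℝ) :
    truncWeight φ t₀ t ≤ ENNReal.ofReal (φ t) + ENNReal.ofReal (φ t₀) := by
  refine (indicator_le_self' (fun _ _ ↦ zero_le) t).trans ?_
  rcases max_choice t t₀ with h | h <;> simp [h]

theorem lintegral_div_truncWeight_ne_top (hφ : NondecPos φ) (ht₀ : 0 < t₀) {p : ℝ} (hp : 0 < p)
    (hint : IntegrableOn (fun t ↦ (t / φ t) ^ p) (Ioi t₀)) :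
    ∫⁻ t in Ioi (0 : ℝ), (ENNReal.ofReal t / truncWeight φ t₀ t) ^ p ≠ ⊤ := by
  have hφt₀ : ENNReal.ofReal (φ t₀) ≠ 0 := by simpa using hφ.2 t₀ ht₀
  have hnear : ∫⁻ t in Ioc 0 t₀, (ENNReal.ofReal t / truncWeight φ t₀ t) ^ p ≤
      ∫⁻ _ in Ioc 0 t₀, (ENNReal.ofReal t₀ / ENNReal.ofReal (φ t₀)) ^ p := by
    refine setLIntegral_mono' measurableSet_Ioc fun t ht ↦ ?_
    rw [truncWeight_of_pos ht.1, max_eq_right ht.2]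
    gcongr
    exact ht.2
  have hfar : ∫⁻ t in Ioi t₀, (ENNReal.ofReal t / truncWeight φ t₀ t) ^ p ≤
      ∫⁻ t in Ioi t₀, ‖(t / φ t) ^ p‖ₑ := by
    refine setLIntegral_mono' measurableSet_Ioi fun t ht ↦ ?_
    have ht0 : 0 < t := ht₀.trans ht
    rw [truncWeight_of_pos ht0, max_eq_left (le_of_lt ht), ← ENNReal.ofReal_div_of_pos (hφ.2 t ht0),
      ENNReal.ofReal_rpow_of_nonneg (div_pos ht0 (hφ.2 t ht0)).le hp.le]
    exact Real.ofReal_le_enorm _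
  rw [← Ioc_union_Ioi_eq_Ioi ht₀.le]
  refine ne_top_of_le_ne_top (ENNReal.add_ne_top.2 ⟨?_, ?_⟩)
    ((lintegral_union_le _ _ _).trans (add_le_add hnear hfar))
  · rw [setLIntegral_const, Real.volume_Ioc]
    exact ENNReal.mul_ne_top (ENNReal.rpow_ne_top_of_nonneg hp.le
      (ENNReal.div_ne_top ENNReal.ofReal_ne_top hφt₀)) ENNReal.ofReal_ne_top
  · exact hint.2.ne

end TruncWeight

/-! ### Oscillation of continuous Sobolev maps on convex sets -/

section Ray

variable {V E : Type*} [NormedAddCommGroup V] [NormedSpace ℝ V] [NormedAddCommGroup E]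
  [NormedSpace ℝ E] {Q B : Set V} {x z : V}

theorem enorm_sub_ray_le_lintegral_fderiv {G : V → E} (hQ : IsOpen Q) (hG : ContDiffOn ℝ 1 G Q)
    {s : ℝ} (hs : s ≤ 1) (hray : ∀ t ∈ Icc s 1, x + t • (z - x) ∈ Q) :
    ‖G z - G (x + s • (z - x))‖ₑ ≤
      ‖z - x‖ₑ * ∫⁻ t in Icc s 1, ‖fderiv ℝ G (x + t • (z - x))‖ₑ := by
  have hline : ContDiff ℝ 1 fun t : ℝ ↦ x + t • (z - x) := by fun_prop
  have hFTC := enorm_sub_le_lintegral_deriv_of_contDiffOn_Icc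
    (f := fun t : ℝ ↦ G (x + t • (z - x))) (hG.comp hline.contDiffOn hray) hs
  simp only [one_smul, add_sub_cancel] at hFTC
  rw [← lintegral_const_mul' _ _ enorm_ne_top]
  refine hFTC.trans (setLIntegral_mono' measurableSet_Icc fun t ht ↦ ?_)
  have hGd : HasFDerivAt G (fderiv ℝ G (x + t • (z - x))) (x + t • (z - x)) :=
    ((hG.contDiffAt (hQ.mem_nhds (hray t ht))).differentiableAt one_ne_zero).hasFDerivAt
  have hld : HasDerivAt (fun t : ℝ ↦ x + t • (z - x)) (z - x) t := by
    simpa using ((hasDerivAt_id t).smul_const (z - x)).const_add x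
  rw [show deriv (fun t : ℝ ↦ G (x + t • (z - x))) t = _ from
    (hGd.comp_hasDerivAt t hld).deriv, mul_comm]
  exact ContinuousLinearMap.le_opENorm _ _

variable [FiniteDimensional ℝ V] [MeasurableSpace V] [BorelSpace V] {μ : Measure V}
  [μ.IsAddHaarMeasure]

theorem map_ray_restrict_le (hB : Convex ℝ B) (hBm : MeasurableSet B) (hx : x ∈ B) {t : ℝ}
    (ht0 : 0 < t) (ht1 : t ≤ 1) :
    (μ.restrict B).map (fun z ↦ x + t • (z - x)) ≤
      ENNReal.ofReal (t ^ Module.finrank ℝ V)⁻¹ • μ.restrict B := by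
  have hmap : μ.map (fun z ↦ x + t • (z - x)) =
      ENNReal.ofReal (t ^ Module.finrank ℝ V)⁻¹ • μ := by
    have hcomp : (fun z ↦ x + t • (z - x)) = (fun z ↦ (x - t • x) + z) ∘ (t • ·) := by
      ext z; simp only [Function.comp_apply, smul_sub]; abel
    rw [hcomp, ← Measure.map_map (by fun_prop) (by fun_prop), Measure.map_addHaar_smul μ ht0.ne',
      Measure.map_smul, map_add_left_eq_self, abs_of_pos (by positivity)]
  have hsub : B ⊆ (fun z ↦ x + t • (z - x)) ⁻¹' B := fun z hz ↦
    hB.add_smul_sub_mem hx hz ⟨ht0.le, ht1⟩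
  calc (μ.restrict B).map (fun z ↦ x + t • (z - x))
      ≤ (μ.restrict ((fun z ↦ x + t • (z - x)) ⁻¹' B)).map (fun z ↦ x + t • (z - x)) :=
        Measure.map_mono (Measure.restrict_mono hsub le_rfl) (by fun_prop)
    _ = _ := by rw [← Measure.restrict_map (by fun_prop) hBm, hmap, Measure.restrict_smul]

theorem setLIntegral_ray_le (hB : Convex ℝ B) (hBm : MeasurableSet B) (hx : x ∈ B) {t : ℝ}
    (ht0 : 0 < t) (ht1 : t ≤ 1) (h : V → ℝ≥0∞) :
    ∫⁻ z in B, h (x + t • (z - x)) ∂μ ≤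
      ENNReal.ofReal (t ^ Module.finrank ℝ V)⁻¹ * ∫⁻ z in B, h z ∂μ := by
  have hemb : MeasurableEmbedding fun z ↦ x + t • (z - x) :=
    ((measurableEmbedding_addLeft x).comp (measurableEmbedding_const_smul₀ ht0.ne')).comp
      (MeasurableEquiv.subRight x).measurableEmbedding
  rw [← hemb.lintegral_map, ← smul_eq_mul, ← lintegral_smul_measure]
  exact lintegral_mono' (map_ray_restrict_le hB hBm hx ht0 ht1) le_rfl

/-- `D` is a limit in `L¹(Q)` of the derivatives of `C¹` maps converging pointwise to `F` on `Q`: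
the form in which weak differentiability is used. -/
def HasApproxFDerivOn (μ : Measure V) (Q : Set V) (F : V → E) (D : V → V →L[ℝ] E) : Prop :=
  ∃ G : ℕ → V → E, (∀ j, ContDiffOn ℝ 1 (G j) Q) ∧
    (∀ x ∈ Q, Tendsto (fun j ↦ G j x) atTop (𝓝 (F x))) ∧
    Tendsto (fun j ↦ ∫⁻ x in Q, ‖fderiv ℝ (G j) x - D x‖ₑ ∂μ) atTop (𝓝 0)

variable {F : V → E} {D : V → V →L[ℝ] E}

theorem setLIntegral_enorm_sub_ray_le_of_contDiffOn [CompleteSpace E] {G : V → E} (hQ : IsOpen Q)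
    (hG : ContDiffOn ℝ 1 G Q) (hB : Convex ℝ B) (hBm : MeasurableSet B) (hBQ : B ⊆ Q)
    (hx : x ∈ B) {s : ℝ} (hs0 : 0 ≤ s) (hs1 : s ≤ 1) :
    ∫⁻ z in B, ‖G z - G (x + s • (z - x))‖ₑ ∂μ ≤
      ediam B * ∫⁻ t in Icc s 1, ∫⁻ z in B, ‖fderiv ℝ G (x + t • (z - x))‖ₑ ∂μ := by
  borelize (V →L[ℝ] E)
  have hmeas : Measurable fun p : V × ℝ ↦ ‖fderiv ℝ G (x + p.2 • (p.1 - x))‖ₑ :=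
    ((measurable_fderiv ℝ G).comp (by fun_prop)).enorm
  rw [← lintegral_lintegral_swap hmeas.aemeasurable,
    ← lintegral_const_mul _ hmeas.lintegral_prod_right]
  refine setLIntegral_mono' hBm fun z hz ↦ ?_
  have hdiam : ‖z - x‖ₑ ≤ ediam B := edist_eq_enorm_sub z x ▸ edist_le_ediam_of_mem hz hx
  exact (enorm_sub_ray_le_lintegral_fderiv hQ hG hs1 fun t ht ↦
    hBQ (hB.add_smul_sub_mem hx hz ⟨hs0.trans ht.1, ht.2⟩)).trans (mul_le_mul_left hdiam _)

theorem lintegral_enorm_ray_le_add (hD : StronglyMeasurable D) (D' : V → V →L[ℝ] E)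
    (hB : Convex ℝ B) (hBm : MeasurableSet B) (hx : x ∈ B) {s : ℝ} (hs0 : 0 < s) :
    ∫⁻ t in Icc s 1, ∫⁻ z in B, ‖D' (x + t • (z - x))‖ₑ ∂μ ≤
      (∫⁻ t in Ioc (0 : ℝ) 1, ∫⁻ z in B, ‖D (x + t • (z - x))‖ₑ ∂μ) +
        ENNReal.ofReal (s ^ Module.finrank ℝ V)⁻¹ * ∫⁻ z in B, ‖D' z - D z‖ₑ ∂μ := by
  have hslice : ∀ t ∈ Icc s 1, ∫⁻ z in B, ‖D' (x + t • (z - x))‖ₑ ∂μ ≤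
      (∫⁻ z in B, ‖D (x + t • (z - x))‖ₑ ∂μ) +
        ENNReal.ofReal (s ^ Module.finrank ℝ V)⁻¹ * ∫⁻ z in B, ‖D' z - D z‖ₑ ∂μ := by
    intro t ht
    calc ∫⁻ z in B, ‖D' (x + t • (z - x))‖ₑ ∂μ
        ≤ ∫⁻ z in B, (‖D (x + t • (z - x))‖ₑ +
            ‖D' (x + t • (z - x)) - D (x + t • (z - x))‖ₑ) ∂μ := by
          refine lintegral_mono fun z ↦ ?_
          simpa only [add_sub_cancel] using enorm_add_le (D (x + t • (z - x)))
            (D' (x + t • (z - x)) - D (x + t • (z - x)))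
      _ = (∫⁻ z in B, ‖D (x + t • (z - x))‖ₑ ∂μ) +
            ∫⁻ z in B, ‖D' (x + t • (z - x)) - D (x + t • (z - x))‖ₑ ∂μ :=
          lintegral_add_left (hD.comp_measurable (by fun_prop)).enorm _
      _ ≤ _ := by
          refine add_le_add le_rfl ((setLIntegral_ray_le hB hBm hx (hs0.trans_le ht.1) ht.2
            fun z ↦ ‖D' z - D z‖ₑ).trans (mul_le_mul_left (ENNReal.ofReal_le_ofReal ?_) _))
          gcongr
          exact ht.1
  calc _ ≤ ∫⁻ t in Icc s 1, _ := setLIntegral_mono' measurableSet_Icc hslice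
    _ ≤ ∫⁻ t in Ioc (0 : ℝ) 1, _ := lintegral_mono_set fun t ht ↦ ⟨hs0.trans_le ht.1, ht.2⟩
    _ = _ := by simp [lintegral_add_right _ measurable_const]

theorem HasApproxFDerivOn.setLIntegral_enorm_sub_ray_le [CompleteSpace E]
    (hF : HasApproxFDerivOn μ Q F D) (hD : StronglyMeasurable D) (hQ : IsOpen Q)
    (hB : Convex ℝ B) (hBm : MeasurableSet B) (hBb : Bornology.IsBounded B) (hBQ : B ⊆ Q)
    (hx : x ∈ B) {s : ℝ} (hs0 : 0 < s) (hs1 : s ≤ 1) :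
    ∫⁻ z in B, ‖F z - F (x + s • (z - x))‖ₑ ∂μ ≤
      ediam B * ∫⁻ t in Ioc (0 : ℝ) 1, ∫⁻ z in B, ‖D (x + t • (z - x))‖ₑ ∂μ := by
  obtain ⟨G, hG, hGF, hGD⟩ := hF
  have hrayB : ∀ z ∈ B, x + s • (z - x) ∈ B := fun z hz ↦ hB.add_smul_sub_mem hx hz ⟨hs0.le, hs1⟩
  have hC1 : ∀ j, ∫⁻ z in B, ‖G j z - G j (x + s • (z - x))‖ₑ ∂μ ≤
      ediam B * ((∫⁻ t in Ioc (0 : ℝ) 1, ∫⁻ z in B, ‖D (x + t • (z - x))‖ₑ ∂μ) +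
        ENNReal.ofReal (s ^ Module.finrank ℝ V)⁻¹ *
          ∫⁻ z in Q, ‖fderiv ℝ (G j) z - D z‖ₑ ∂μ) := fun j ↦
    (setLIntegral_enorm_sub_ray_le_of_contDiffOn hQ (hG j) hB hBm hBQ hx hs0.le hs1).trans <|
      mul_le_mul_right ((lintegral_enorm_ray_le_add hD _ hB hBm hx hs0).trans <|
        add_le_add_right (mul_le_mul_right (lintegral_mono_set hBQ) _) _) _
  have herr := ENNReal.Tendsto.const_mul (a := ENNReal.ofReal (s ^ Module.finrank ℝ V)⁻¹) hGD
    (.inr ENNReal.ofReal_ne_top)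
  have hlim := ENNReal.Tendsto.const_mul (a := ediam B) (herr.const_add
    (∫⁻ t in Ioc (0 : ℝ) 1, ∫⁻ z in B, ‖D (x + t • (z - x))‖ₑ ∂μ)) (.inr hBb.ediam_ne_top)
  rw [mul_zero, add_zero] at hlim
  calc ∫⁻ z in B, ‖F z - F (x + s • (z - x))‖ₑ ∂μ
      = ∫⁻ z in B, liminf (fun j ↦ ‖G j z - G j (x + s • (z - x))‖ₑ) atTop ∂μ :=
        setLIntegral_congr_fun hBm fun z hz ↦
          ((hGF z (hBQ hz)).sub (hGF _ (hBQ (hrayB z hz)))).enorm.liminf_eq.symm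
    _ ≤ liminf (fun j ↦ ∫⁻ z in B, ‖G j z - G j (x + s • (z - x))‖ₑ ∂μ) atTop :=
        lintegral_liminf_le' fun j ↦ by
          have hGB := (hG j).continuousOn.mono hBQ
          exact (hGB.sub (hGB.comp (by fun_prop) hrayB)).enorm.aemeasurable hBm
    _ ≤ _ := (liminf_le_liminf (.of_forall hC1)).trans_eq hlim.liminf_eq

theorem HasApproxFDerivOn.setLIntegral_enorm_sub_le [CompleteSpace E]
    (hF : HasApproxFDerivOn μ Q F D) (hD : StronglyMeasurable D) (hFc : ContinuousOn F Q)
    (hQ : IsOpen Q) (hB : Convex ℝ B) (hBm : MeasurableSet B) (hBb : Bornology.IsBounded B)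
    (hBQ : B ⊆ Q) (hx : x ∈ B) :
    ∫⁻ z in B, ‖F z - F x‖ₑ ∂μ ≤
      ediam B * ∫⁻ t in Ioc (0 : ℝ) 1, ∫⁻ z in B, ‖D (x + t • (z - x))‖ₑ ∂μ := by
  set s : ℕ → ℝ := fun j ↦ 1 / ((j : ℝ) + 1)
  have hs0 : ∀ j, 0 < s j := fun j ↦ Nat.one_div_pos_of_nat
  have hs1 : ∀ j, s j ≤ 1 := fun j ↦ by
    simpa [s] using Nat.one_div_le_one_div (α := ℝ) (Nat.zero_le j)
  have hrayB : ∀ j, ∀ z ∈ B, x + s j • (z - x) ∈ B := fun j z hz ↦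
    hB.add_smul_sub_mem hx hz ⟨(hs0 j).le, hs1 j⟩
  have hFB := hFc.mono hBQ
  have hlim : ∀ z ∈ B, Tendsto (fun j ↦ ‖F z - F (x + s j • (z - x))‖ₑ) atTop
      (𝓝 ‖F z - F x‖ₑ) := by
    intro z hz
    have hray : Tendsto (fun j ↦ x + s j • (z - x)) atTop (𝓝 x) := by
      simpa [s] using
        ((tendsto_one_div_add_atTop_nhds_zero_nat (𝕜 := ℝ)).smul_const (z - x)).const_add x
    exact (tendsto_const_nhds.sub ((hFB x hx).tendsto.comp
      (tendsto_nhdsWithin_iff.2 ⟨hray, .of_forall fun j ↦ hrayB j z hz⟩))).enorm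
  calc ∫⁻ z in B, ‖F z - F x‖ₑ ∂μ
      = ∫⁻ z in B, liminf (fun j ↦ ‖F z - F (x + s j • (z - x))‖ₑ) atTop ∂μ :=
        setLIntegral_congr_fun hBm fun z hz ↦ (hlim z hz).liminf_eq.symm
    _ ≤ liminf (fun j ↦ ∫⁻ z in B, ‖F z - F (x + s j • (z - x))‖ₑ ∂μ) atTop :=
        lintegral_liminf_le' fun j ↦
          (hFB.sub (hFB.comp (by fun_prop) (hrayB j))).enorm.aemeasurable hBm
    _ ≤ _ := (liminf_le_liminf (.of_forall fun j ↦ hF.setLIntegral_enorm_sub_ray_le hD hQ hB hBm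
        hBb hBQ hx (hs0 j) (hs1 j))).trans_eq (liminf_const _)

end Ray

section RayLorentz

theorem lintegral_min_one_div_rpow_le {q τ : ℝ} (hq : 1 < q) (hτ : 0 ≤ τ) :
    ∫⁻ t in Ioi (0 : ℝ), min 1 (ENNReal.ofReal ((τ / t) ^ q)) ≤
      ENNReal.ofReal (q / (q - 1) * τ) := by
  have hq1 : 0 < q - 1 := sub_pos.2 hq
  rcases hτ.eq_or_lt with rfl | hτ
  · simp [Real.zero_rpow (one_pos.trans hq).ne']
  have hnear : ∫⁻ t in Ioc 0 τ, min 1 (ENNReal.ofReal ((τ / t) ^ q)) ≤ ENNReal.ofReal τ :=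
    (lintegral_mono fun t ↦ min_le_left _ _).trans (by simp)
  have hint : IntegrableOn (fun t : ℝ ↦ τ ^ q * t ^ (-q)) (Ioi τ) :=
    (integrableOn_Ioi_rpow_of_lt (by linarith) hτ).const_mul _
  have hfar : ∫⁻ t in Ioi τ, min 1 (ENNReal.ofReal ((τ / t) ^ q)) ≤
      ENNReal.ofReal (τ / (q - 1)) := by
    calc ∫⁻ t in Ioi τ, min 1 (ENNReal.ofReal ((τ / t) ^ q))
        ≤ ∫⁻ t in Ioi τ, ENNReal.ofReal (τ ^ q * t ^ (-q)) := by
          refine setLIntegral_mono' measurableSet_Ioi fun t ht ↦ (min_le_right _ _).trans_eq ?_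
          have ht0 : 0 ≤ t := hτ.le.trans (le_of_lt ht)
          rw [Real.div_rpow hτ.le ht0, Real.rpow_neg ht0, div_eq_mul_inv]
      _ = ENNReal.ofReal (τ / (q - 1)) := by
          rw [← ofReal_integral_eq_lintegral_ofReal hint
            ((ae_restrict_iff' measurableSet_Ioi).2 <| ae_of_all _ fun t ht ↦
              mul_nonneg (by positivity) (Real.rpow_nonneg (hτ.trans ht).le _)),
            integral_const_mul, integral_Ioi_rpow_of_lt (by linarith) hτ]
          have hpow : τ ^ q * τ ^ (-q + 1) = τ := by
            rw [← Real.rpow_add hτ, add_neg_cancel_left, Real.rpow_one]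
          congr 1
          rw [show -q + 1 = -(q - 1) by ring] at *
          rw [neg_div_neg_eq, ← mul_div_assoc, hpow]
  rw [← Ioc_union_Ioi_eq_Ioi hτ.le]
  refine (lintegral_union_le _ _ _).trans ((add_le_add hnear hfar).trans_eq ?_)
  rw [← ENNReal.ofReal_add hτ.le (by positivity)]
  congr 1
  field_simp
  ring

theorem lintegral_min_div_rpow_le {q : ℝ} (hq : 1 < q) {m a : ℝ≥0∞} (hm0 : m ≠ 0) (hm : m ≠ ⊤)
    (ha : a ≠ ⊤) :
    ∫⁻ t in Ioi (0 : ℝ), min m (ENNReal.ofReal (t ^ q)⁻¹ * a) ≤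
      ENNReal.ofReal (q / (q - 1)) * (m ^ (1 - 1 / q) * a ^ (1 / q)) := by
  have hq0 : 0 < q := one_pos.trans hq
  set τ : ℝ := ((a / m) ^ (1 / q)).toReal
  have hτ_eq : ENNReal.ofReal τ = (a / m) ^ (1 / q) := ENNReal.ofReal_toReal
    (ENNReal.rpow_ne_top_of_nonneg (by positivity) (ENNReal.div_ne_top ha hm0))
  have hscale : ∀ t ∈ Ioi (0 : ℝ), min m (ENNReal.ofReal (t ^ q)⁻¹ * a) =
      m * min 1 (ENNReal.ofReal ((τ / t) ^ q)) := by
    intro t ht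
    have hτq : ENNReal.ofReal (τ ^ q) = a / m := by
      rw [← ENNReal.ofReal_rpow_of_nonneg ENNReal.toReal_nonneg hq0.le, hτ_eq, ← ENNReal.rpow_mul,
        one_div_mul_cancel hq0.ne', ENNReal.rpow_one]
    rw [mul_min, mul_one, Real.div_rpow ENNReal.toReal_nonneg (le_of_lt ht), div_eq_mul_inv,
      ENNReal.ofReal_mul (Real.rpow_nonneg ENNReal.toReal_nonneg _), hτq, ← mul_assoc,
      ENNReal.mul_div_cancel hm0 hm, mul_comm a]
  rw [setLIntegral_congr_fun measurableSet_Ioi hscale, lintegral_const_mul' _ _ hm]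
  calc m * ∫⁻ t in Ioi (0 : ℝ), min 1 (ENNReal.ofReal ((τ / t) ^ q))
      ≤ m * ENNReal.ofReal (q / (q - 1) * τ) :=
        mul_le_mul_right (lintegral_min_one_div_rpow_le hq ENNReal.toReal_nonneg) _
    _ = _ := by
        have hpow : m * (a / m) ^ (1 / q) = m ^ (1 - 1 / q) * a ^ (1 / q) := by
          rw [ENNReal.div_rpow_of_nonneg _ _ (by positivity), ENNReal.rpow_sub _ _ hm0 hm,
            ENNReal.rpow_one, ← mul_div_assoc, ENNReal.mul_div_right_comm]
        rw [ENNReal.ofReal_mul (div_nonneg hq0.le (sub_pos.2 hq).le), hτ_eq, mul_left_comm, hpow]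

variable {V E : Type*} [NormedAddCommGroup V] [NormedSpace ℝ V] [FiniteDimensional ℝ V]
  [MeasurableSpace V] {μ : Measure V} [μ.IsAddHaarMeasure]

/-- The constant in the embedding of `W¹L^{k,1}` into continuous functions on balls, `k = dim V`. -/
noncomputable def lorentzSobolevConst (μ : Measure V) : ℝ≥0∞ :=
  2 * (ENNReal.ofReal (2 * Module.finrank ℝ V / (Module.finrank ℝ V - 1)) *
    μ (ball 0 1) ^ (-(1 / (Module.finrank ℝ V : ℝ))))

theorem lorentzSobolevConst_ne_top : lorentzSobolevConst μ ≠ ⊤ := by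
  have hω0 : μ (ball (0 : V) 1) ≠ 0 := (measure_ball_pos μ 0 one_pos).ne'
  have hω : μ (ball (0 : V) 1) ≠ ⊤ := measure_ball_lt_top.ne
  rw [lorentzSobolevConst]
  finiteness

variable [BorelSpace V] [NormedAddCommGroup E] {B : Set V} {x : V}

theorem lintegral_ray_enorm_le_lorentzNorm (hk : 1 < Module.finrank ℝ V) {D : V → E}
    (hD : StronglyMeasurable D) (hB : Convex ℝ B) (hBm : MeasurableSet B) (hB0 : μ B ≠ 0)
    (hB_top : μ B ≠ ⊤) (hx : x ∈ B) :
    ∫⁻ t in Ioc (0 : ℝ) 1, ∫⁻ z in B, ‖D (x + t • (z - x))‖ₑ ∂μ ≤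
      ENNReal.ofReal (Module.finrank ℝ V / (Module.finrank ℝ V - 1)) *
        (μ B ^ (1 - 1 / (Module.finrank ℝ V : ℝ)) *
          lorentzNorm (Module.finrank ℝ V) D (μ.restrict B)) := by
  set k := Module.finrank ℝ V
  have hk' : (1 : ℝ) < k := mod_cast hk
  set a : ℝ → ℝ≥0∞ := fun s ↦ (μ.restrict B) {z | s < ‖D z‖}
  have ham : Measurable a := measurable_meas_lt_norm D _
  have haB : ∀ s, a s ≤ μ B := fun s ↦ (measure_mono (subset_univ _)).trans (by simp)
  have hslice : ∀ t ∈ Ioc (0 : ℝ) 1, ∫⁻ z in B, ‖D (x + t • (z - x))‖ₑ ∂μ ≤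
      ∫⁻ s in Ioi (0 : ℝ), min (μ B) (ENNReal.ofReal (t ^ (k : ℝ))⁻¹ * a s) := by
    intro t ht
    have hDt : StronglyMeasurable fun z ↦ D (x + t • (z - x)) := hD.comp_measurable (by fun_prop)
    simp_rw [← ofReal_norm]
    rw [lintegral_eq_lintegral_meas_lt _ (ae_of_all _ fun z ↦ norm_nonneg _)
      hDt.norm.measurable.aemeasurable]
    refine lintegral_mono fun s ↦ le_min ((measure_mono (subset_univ _)).trans (by simp)) ?_
    rw [Real.rpow_natCast]
    calc _ = (μ.restrict B).map (fun z ↦ x + t • (z - x)) {z | s < ‖D z‖} :=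
          (Measure.map_apply (by fun_prop)
            (measurableSet_lt measurable_const hD.norm.measurable)).symm
      _ ≤ _ := map_ray_restrict_le hB hBm hx ht.1 ht.2 _
  calc _ ≤ ∫⁻ t in Ioc (0 : ℝ) 1, ∫⁻ s in Ioi (0 : ℝ),
          min (μ B) (ENNReal.ofReal (t ^ (k : ℝ))⁻¹ * a s) :=
        setLIntegral_mono' measurableSet_Ioc hslice
    _ = ∫⁻ s in Ioi (0 : ℝ), ∫⁻ t in Ioc (0 : ℝ) 1,
          min (μ B) (ENNReal.ofReal (t ^ (k : ℝ))⁻¹ * a s) :=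
        lintegral_lintegral_swap (by apply Measurable.aemeasurable; fun_prop)
    _ ≤ ∫⁻ s in Ioi (0 : ℝ), ENNReal.ofReal (k / (k - 1)) *
          (μ B ^ (1 - 1 / (k : ℝ)) * a s ^ (1 / (k : ℝ))) := lintegral_mono fun s ↦
        (lintegral_mono_set Ioc_subset_Ioi_self).trans
          (lintegral_min_div_rpow_le hk' hB0 hB_top (ne_top_of_le_ne_top hB_top (haB s)))
    _ = _ := by
        rw [lintegral_const_mul _ (by fun_prop), lintegral_const_mul _ (by fun_prop)]
        rfl

variable [NormedSpace ℝ E] [CompleteSpace E] {Q : Set V} {F : V → E} {D : V → V →L[ℝ] E}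

theorem HasApproxFDerivOn.setLIntegral_enorm_sub_le_lorentzNorm (hk : 1 < Module.finrank ℝ V)
    (hF : HasApproxFDerivOn μ Q F D) (hD : StronglyMeasurable D) (hFc : ContinuousOn F Q)
    (hQ : IsOpen Q) {c : V} {ρ : ℝ} (hρ : 0 < ρ) (hBQ : closedBall c ρ ⊆ Q)
    (hx : x ∈ closedBall c ρ) :
    ∫⁻ z in closedBall c ρ, ‖F z - F x‖ₑ ∂μ ≤
      ENNReal.ofReal (2 * Module.finrank ℝ V / (Module.finrank ℝ V - 1)) *
        μ (ball 0 1) ^ (-(1 / (Module.finrank ℝ V : ℝ))) *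
        lorentzNorm (Module.finrank ℝ V) D (μ.restrict (closedBall c ρ)) * μ (closedBall c ρ) := by
  set k := Module.finrank ℝ V
  set B := closedBall c ρ
  have hB0 : μ B ≠ 0 := (measure_closedBall_pos μ c hρ).ne'
  have hB_top : μ B ≠ ⊤ := measure_closedBall_lt_top.ne
  have hω : μ (ball (0 : V) 1) ≠ ⊤ := measure_ball_lt_top.ne
  have hμB : μ B = ENNReal.ofReal ρ ^ (k : ℝ) * μ (ball 0 1) := by
    rw [Measure.addHaar_closedBall μ c hρ.le, ENNReal.rpow_natCast, ENNReal.ofReal_pow hρ.le]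
  have hdiam : ediam B * μ B ^ (1 - 1 / (k : ℝ)) ≤
      2 * μ (ball 0 1) ^ (-(1 / (k : ℝ))) * μ B := by
    have hρB : ENNReal.ofReal ρ * μ B ^ (-(1 / (k : ℝ))) = μ (ball 0 1) ^ (-(1 / (k : ℝ))) := by
      have hρ0 : ENNReal.ofReal ρ ≠ 0 := by simpa using hρ
      rw [hμB, ENNReal.mul_rpow_of_ne_top (by finiteness) hω, ← ENNReal.rpow_mul, mul_neg,
        mul_one_div_cancel (by positivity), ENNReal.rpow_neg_one, ← mul_assoc,
        ENNReal.mul_inv_cancel hρ0 ENNReal.ofReal_ne_top, one_mul]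
    calc ediam B * μ B ^ (1 - 1 / (k : ℝ))
        ≤ 2 * ENNReal.ofReal ρ * μ B ^ (1 - 1 / (k : ℝ)) :=
          mul_le_mul_left ((congrArg ediam (closedEBall_ofReal hρ.le)).symm.trans_le
            ediam_closedEBall_le) _
      _ = _ := by
        rw [sub_eq_add_neg, ENNReal.rpow_add _ _ hB0 hB_top, ENNReal.rpow_one, ← hρB]
        ring
  refine (hF.setLIntegral_enorm_sub_le hD hFc hQ (convex_closedBall c ρ) measurableSet_closedBall
    isBounded_closedBall hBQ hx).trans ?_
  calc _ ≤ ediam B * (ENNReal.ofReal (k / (k - 1)) *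
          (μ B ^ (1 - 1 / (k : ℝ)) * lorentzNorm k D (μ.restrict B))) :=
        mul_le_mul_right (lintegral_ray_enorm_le_lorentzNorm hk hD (convex_closedBall c ρ)
          measurableSet_closedBall hB0 hB_top hx) _
    _ = ENNReal.ofReal (k / (k - 1)) * (ediam B * μ B ^ (1 - 1 / (k : ℝ))) *
          lorentzNorm k D (μ.restrict B) := by ring
    _ ≤ ENNReal.ofReal (k / (k - 1)) * (2 * μ (ball 0 1) ^ (-(1 / (k : ℝ))) * μ B) *
          lorentzNorm k D (μ.restrict B) := by gcongr
    _ = _ := by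
        rw [mul_div_assoc, ENNReal.ofReal_mul zero_le_two, ENNReal.ofReal_ofNat]
        ring

theorem HasApproxFDerivOn.ediam_image_closedBall_le (hk : 1 < Module.finrank ℝ V)
    (hF : HasApproxFDerivOn μ Q F D) (hD : StronglyMeasurable D) (hFc : ContinuousOn F Q)
    (hQ : IsOpen Q) {c : V} {ρ : ℝ} (hρ : 0 < ρ) (hBQ : closedBall c ρ ⊆ Q) :
    ediam (F '' closedBall c ρ) ≤ lorentzSobolevConst μ *
      lorentzNorm (Module.finrank ℝ V) D (μ.restrict (closedBall c ρ)) := by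
  have hmean : ∀ x ∈ closedBall c ρ, _ := fun x hx ↦
    hF.setLIntegral_enorm_sub_le_lorentzNorm hk hD hFc hQ hρ hBQ hx
  refine ediam_image_le_iff.2 fun x hx y hy ↦ ?_
  refine (ENNReal.mul_le_mul_iff_left (measure_closedBall_pos μ c hρ).ne'
    measure_closedBall_lt_top.ne).1 ?_
  calc edist (F x) (F y) * μ (closedBall c ρ) = ∫⁻ _ in closedBall c ρ, edist (F x) (F y) ∂μ := by
        simp
    _ ≤ ∫⁻ z in closedBall c ρ, (‖F z - F x‖ₑ + ‖F z - F y‖ₑ) ∂μ := lintegral_mono fun z ↦ by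
        simpa only [← edist_eq_enorm_sub] using edist_triangle_left (F x) (F y) (F z)
    _ = (∫⁻ z in closedBall c ρ, ‖F z - F x‖ₑ ∂μ) + ∫⁻ z in closedBall c ρ, ‖F z - F y‖ₑ ∂μ :=
        lintegral_add_left' (((hFc.mono hBQ).sub continuousOn_const).enorm.aemeasurable
          measurableSet_closedBall) _
    _ ≤ _ := (add_le_add (hmean x hx) (hmean y hy)).trans_eq <| by
        rw [lorentzSobolevConst]; ring

end RayLorentz

/-! ### Hausdorff measure of images -/

section Hausdorff

variable {α X : Type*} [MetricSpace α] [SecondCountableTopology α] [HasBesicovitchCovering α]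
  [MeasurableSpace α] [OpensMeasurableSpace α] [MetricSpace X] {Q A : Set α} {F : α → X}

theorem exists_closedBall_covering_ediam_image_le (ν : Measure α) [SFinite ν] [ν.OuterRegular]
    (hQ : IsOpen Q) (hF : ContinuousOn F Q) (hA : A ⊆ Q) {ε : ℝ≥0∞} (hε : ε ≠ 0) :
    ∃ (t : Set α) (r : α → ℝ), t.Countable ∧
      (∀ x ∈ t, 0 < r x ∧ closedBall x (r x) ⊆ Q ∧ ediam (F '' closedBall x (r x)) ≤ ε) ∧
      A ⊆ ⋃ x ∈ t, closedBall x (r x) ∧ ∑' x : t, ν (closedBall x (r x)) ≤ ν A + ε := by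
  obtain ⟨t, r, ht, -, hr, hcover, hsum⟩ := Besicovitch.exists_closedBall_covering_tsum_measure_le
    ν hε (fun x ↦ {ρ | 0 < ρ ∧ closedBall x ρ ⊆ Q ∧ ediam (F '' closedBall x ρ) ≤ ε}) A <| by
      intro x hx δ hδ
      have hev : ∀ᶠ y in 𝓝 x, y ∈ Q ∧ F y ∈ closedEBall (F x) (ε / 2) :=
        (hQ.eventually_mem (hA hx)).and <| (hF.continuousAt (hQ.mem_nhds (hA hx))).eventually
          (closedEBall_mem_nhds _ (ENNReal.half_pos hε))
      obtain ⟨ρ, hρ, hρs⟩ := nhds_basis_closedBall.eventually_iff.1 hev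
      have hsub : closedBall x (min ρ (δ / 2)) ⊆ closedBall x ρ :=
        closedBall_subset_closedBall (min_le_left _ _)
      refine ⟨min ρ (δ / 2), ⟨by positivity, fun y hy ↦ (hρs (hsub hy)).1, ?_⟩, by positivity,
        (min_le_right _ _).trans_lt (half_lt_self hδ)⟩
      calc ediam (F '' closedBall x (min ρ (δ / 2))) ≤ ediam (closedEBall (F x) (ε / 2)) :=
            ediam_mono (image_subset_iff.2 fun y hy ↦ (hρs (hsub hy)).2)
        _ ≤ 2 * (ε / 2) := ediam_closedEBall_le
        _ = ε := ENNReal.mul_div_cancel two_ne_zero ENNReal.ofNat_ne_top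
  exact ⟨t, r, ht, hr, hcover, hsum⟩

theorem hausdorffMeasure_image_le_of_ediam_rpow_le [MeasurableSpace X] [BorelSpace X]
    {ν : Measure α} [SFinite ν] [ν.OuterRegular] {d : ℝ} {C : ℝ≥0∞} (hC : C ≠ ⊤) (hQ : IsOpen Q)
    (hF : ContinuousOn F Q)
    (hball : ∀ x ρ, 0 < ρ → closedBall x ρ ⊆ Q →
      ediam (F '' closedBall x ρ) ^ d ≤ C * ν (closedBall x ρ)) (hA : A ⊆ Q) :
    μH[d] (F '' A) ≤ C * ν A := by
  set ε : ℕ → ℝ≥0∞ := fun j ↦ ((j : ℝ≥0∞) + 1)⁻¹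
  have hε0 : Tendsto ε atTop (𝓝 0) := by
    simpa [ε] using (tendsto_add_atTop_iff_nat 1).2 ENNReal.tendsto_inv_nat_nhds_zero
  choose t r ht hr hcover hsum using fun j ↦
    exists_closedBall_covering_ediam_image_le ν hQ hF hA (ε := ε j) (by simp [ε])
  have : ∀ j, Countable (t j) := fun j ↦ (ht j).to_subtype
  have hlim : Tendsto (fun j ↦ C * (ν A + ε j)) atTop (𝓝 (C * ν A)) := by
    simpa using ENNReal.Tendsto.const_mul (a := C) (hε0.const_add (ν A)) (.inr hC)
  calc μH[d] (F '' A)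
      ≤ liminf (fun j ↦ ∑' x : t j, ediam (F '' closedBall (x : α) (r j x)) ^ d) atTop := by
        refine Measure.hausdorffMeasure_le_liminf_tsum d _ ε hε0
          (fun j (x : t j) ↦ F '' closedBall (x : α) (r j x))
          (.of_forall fun j x ↦ (hr j x x.2).2.2) (.of_forall fun j ↦ ?_)
        rw [← image_iUnion, iUnion_subtype]
        exact image_mono (hcover j)
    _ ≤ liminf (fun j ↦ C * (ν A + ε j)) atTop := liminf_le_liminf <| .of_forall fun j ↦
        calc ∑' x : t j, ediam (F '' closedBall (x : α) (r j x)) ^ d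
            ≤ ∑' x : t j, C * ν (closedBall (x : α) (r j x)) := ENNReal.tsum_le_tsum fun x ↦
              hball _ _ (hr j x x.2).1 (hr j x x.2).2.1
          _ ≤ C * (ν A + ε j) := ENNReal.tsum_mul_left.trans_le (mul_le_mul_right (hsum j) C)
    _ = C * ν A := hlim.liminf_eq

end Hausdorff

section ImageEstimate

variable {V E E' : Type*} [NormedAddCommGroup V] [NormedSpace ℝ V] [FiniteDimensional ℝ V]
  [MeasurableSpace V] {μ : Measure V} [μ.IsAddHaarMeasure]
  [NormedAddCommGroup E] [NormedSpace ℝ E] [CompleteSpace E] [NormedAddCommGroup E']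
  {Q A : Set V} {F : V → E} {D : V → V →L[ℝ] E} {g : V → E'} {c : ℝ≥0} {ψ : ℝ → ℝ≥0∞}

/-- The constant in the estimate of `μH[k] (F '' A)` by `∫ ψ ‖g‖` over `A` for a map whose
derivative is bounded by `c * ‖g‖`. -/
noncomputable def imageConst (μ : Measure V) (c : ℝ≥0) (ψ : ℝ → ℝ≥0∞) : ℝ≥0∞ :=
  (lorentzSobolevConst μ * c) ^ (Module.finrank ℝ V : ℝ) * calderonConst (Module.finrank ℝ V) ψ

theorem imageConst_ne_top (hk : 1 < Module.finrank ℝ V)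
    (hint : ∫⁻ t in Ioi (0 : ℝ), (ENNReal.ofReal t / ψ t) ^
      (1 / ((Module.finrank ℝ V : ℝ) - 1)) ≠ ⊤) :
    imageConst μ c ψ ≠ ⊤ := by
  have hk' : (1 : ℝ) < Module.finrank ℝ V := mod_cast hk
  have hlS := lorentzSobolevConst_ne_top (μ := μ)
  refine ENNReal.mul_ne_top (by finiteness) (ENNReal.rpow_ne_top_of_nonneg (by linarith) ?_)
  exact ENNReal.mul_ne_top (by finiteness) hint

variable [BorelSpace V]

theorem HasApproxFDerivOn.hausdorffMeasure_image_le [MeasurableSpace E] [BorelSpace E]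
    (hk : 1 < Module.finrank ℝ V) (hF : HasApproxFDerivOn μ Q F D) (hD : StronglyMeasurable D)
    (hFc : ContinuousOn F Q) (hQ : IsOpen Q) (hg : StronglyMeasurable g)
    (hDg : ∀ x ∈ Q, ‖D x‖ ≤ c * ‖g x‖) (hψ : Monotone ψ) (hψ_top : ∀ t, 0 < t → ψ t ≠ ⊤)
    (hint : ∫⁻ t in Ioi (0 : ℝ), (ENNReal.ofReal t / ψ t) ^
      (1 / ((Module.finrank ℝ V : ℝ) - 1)) ≠ ⊤)
    (hgQ : ∫⁻ x in Q, ψ ‖g x‖ ∂μ ≠ ⊤) (hA : A ⊆ Q) :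
    μH[Module.finrank ℝ V] (F '' A) ≤ imageConst μ c ψ * ∫⁻ x in A, ψ ‖g x‖ ∂μ := by
  set k := Module.finrank ℝ V
  have hk' : (1 : ℝ) < k := mod_cast hk
  have hk0 : (0 : ℝ) < k := one_pos.trans hk'
  set ν := (μ.restrict Q).withDensity fun x ↦ ψ ‖g x‖
  have hν : ∀ S ⊆ Q, ν S = ∫⁻ x in S, ψ ‖g x‖ ∂μ := fun S hS ↦ by
    rw [withDensity_apply', Measure.restrict_restrict' hQ.measurableSet, inter_eq_left.2 hS]
  have : IsFiniteMeasure ν := isFiniteMeasure_withDensity hgQ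
  rw [← hν A hA]
  refine hausdorffMeasure_image_le_of_ediam_rpow_le (imageConst_ne_top hk hint) hQ hFc
    (fun x ρ hρ hxρ ↦ ?_) hA
  have hnorm : ediam (F '' closedBall x ρ) ≤ lorentzSobolevConst μ * c *
      lorentzNorm k g (μ.restrict (closedBall x ρ)) := by
    rw [mul_assoc]
    exact (hF.ediam_image_closedBall_le hk hD hFc hQ hρ hxρ).trans <| mul_le_mul_right
      (lorentzNorm_le_mul hk0 <| (ae_restrict_iff' measurableSet_closedBall).2 <|
        ae_of_all _ fun y hy ↦ hDg y (hxρ hy)) _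
  calc ediam (F '' closedBall x ρ) ^ (k : ℝ)
      ≤ (lorentzSobolevConst μ * c) ^ (k : ℝ) *
          lorentzNorm k g (μ.restrict (closedBall x ρ)) ^ (k : ℝ) := by
        rw [← ENNReal.mul_rpow_of_nonneg _ _ hk0.le]
        gcongr
    _ ≤ (lorentzSobolevConst μ * c) ^ (k : ℝ) * (calderonConst k ψ *
          ∫⁻ y in closedBall x ρ, ψ ‖g y‖ ∂μ) :=
        mul_le_mul_right (lorentzNorm_rpow_le hk' hψ hψ_top hint hg) _
    _ = imageConst μ c ψ * ν (closedBall x ρ) := by rw [hν _ hxρ, imageConst, mul_assoc]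

end ImageEstimate

/-! ### Mollification of weakly differentiable maps -/

section Mollification

open ContinuousLinearMap (lsmul)
open scoped Convolution

variable {V E : Type*} [NormedAddCommGroup V] [NormedSpace ℝ V] [FiniteDimensional ℝ V]
  [MeasurableSpace V] [BorelSpace V] {μ : Measure V} [μ.IsAddHaarMeasure]
  [NormedAddCommGroup E]

lemma tendsto_lintegral_enorm_comp_sub_sub {g : V → E} (hg : Integrable g μ) :
    Tendsto (fun t ↦ ∫⁻ x, ‖g (x - t) - g x‖ₑ ∂μ) (𝓝 0) (𝓝 0) := by
  have : Fact ((1 : ℝ≥0∞) ≠ ∞) := ⟨ENNReal.one_ne_top⟩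
  have hg1 : MemLp g 1 μ := memLp_one_iff_integrable.2 hg
  have hcont : Continuous fun t : V ↦ DomAddAct.mk (-t) +ᵥ hg1.toLp g :=
    (DomAddAct.continuous_mk.comp continuous_neg).vadd continuous_const
  have hdist : Continuous fun t : V ↦ edist (DomAddAct.mk (-t) +ᵥ hg1.toLp g) (hg1.toLp g) :=
    hcont.edist continuous_const
  have hedist (t : V) : edist (DomAddAct.mk (-t) +ᵥ hg1.toLp g) (hg1.toLp g) =
      ∫⁻ x, ‖g (x - t) - g x‖ₑ ∂μ := by
    rw [DomAddAct.mk_vadd_toLp, Lp.edist_toLp_toLp, eLpNorm_one_eq_lintegral_enorm]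
    simp only [Pi.sub_apply, vadd_eq_add, neg_add_eq_sub]
  simpa only [hedist, sub_zero, sub_self, enorm_zero, lintegral_zero] using hdist.tendsto 0

variable [NormedSpace ℝ E]

lemma fderiv_convolution_eq_of_weak {k : V → ℝ} {f : V → E} {D : V → V →L[ℝ] E} {x : V}
    (hk : HasCompactSupport k) (hk1 : ContDiff ℝ 1 k) (hf : LocallyIntegrable f μ)
    (hD : LocallyIntegrable D μ)
    (hweak : ∀ v, ∫ y, k (x - y) • D y v ∂μ =
      -∫ y, fderiv ℝ (fun z ↦ k (x - z)) y v • f y ∂μ) :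
    fderiv ℝ (k ⋆[lsmul ℝ ℝ, μ] f) x = (k ⋆[lsmul ℝ ℝ, μ] D) x := by
  rw [(hk.hasFDerivAt_convolution_left (lsmul ℝ ℝ) hk1 hf x).fderiv]
  have hint := ((hk.fderiv ℝ).convolutionExists_left ((lsmul ℝ ℝ).precompL V)
    (hk1.continuous_fderiv one_ne_zero) hf x).integrable_swap
  have hint' := (hk.convolutionExists_left (lsmul ℝ ℝ) hk1.continuous hD x).integrable_swap
  have hfderiv (y v : V) :
      fderiv ℝ (fun z ↦ k (x - z)) y v = -fderiv ℝ k (x - y) v := by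
    have hcomp := (hk1.differentiable one_ne_zero (x - y)).hasFDerivAt.comp y
      ((hasFDerivAt_id y).const_sub x)
    simpa [Function.comp_def] using congrArg (· v) hcomp.fderiv
  ext v
  rw [convolution_eq_swap, convolution_eq_swap, ContinuousLinearMap.integral_apply hint,
    ContinuousLinearMap.integral_apply hint']
  simpa [hfderiv, integral_neg] using (hweak v).symm

variable [CompleteSpace E] [HasContDiffBump V]

lemma lintegral_enorm_normed_convolution_sub_le (φ : ContDiffBump (0 : V)) {g : V → E} {ε : ℝ≥0∞}
    (hg : Integrable g μ)
    (hε : ∀ t ∈ ball (0 : V) φ.rOut, ∫⁻ x, ‖g (x - t) - g x‖ₑ ∂μ ≤ ε) :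
    ∫⁻ x, ‖(φ.normed μ ⋆[lsmul ℝ ℝ, μ] g) x - g x‖ₑ ∂μ ≤ ε := by
  have hpoint (x : V) : ‖(φ.normed μ ⋆[lsmul ℝ ℝ, μ] g) x - g x‖ₑ ≤
      ∫⁻ t, ‖φ.normed μ t • g (x - t) - φ.normed μ t • g x‖ₑ ∂μ := by
    conv_lhs => rw [← φ.integral_normed_smul μ (g x)]
    rw [convolution_def, ← integral_sub]
    · exact enorm_integral_le_lintegral_enorm _
    · exact φ.hasCompactSupport_normed.convolutionExists_left (lsmul ℝ ℝ) φ.continuous_normed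
        hg.locallyIntegrable x
    · exact φ.integrable_normed.smul_const _
  have hmeas : AEMeasurable
      (fun p : V × V ↦ ‖φ.normed μ p.2 • g (p.1 - p.2) - φ.normed μ p.2 • g p.1‖ₑ)
      (μ.prod μ) :=
    ((φ.continuous_normed.aestronglyMeasurable.convolution_integrand (lsmul ℝ ℝ) hg.1).sub
      (φ.continuous_normed.aestronglyMeasurable.comp_snd.smul hg.1.comp_fst)).enorm
  calc ∫⁻ x, ‖(φ.normed μ ⋆[lsmul ℝ ℝ, μ] g) x - g x‖ₑ ∂μ
      ≤ ∫⁻ x, ∫⁻ t, ‖φ.normed μ t • g (x - t) - φ.normed μ t • g x‖ₑ ∂μ ∂μ :=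
        lintegral_mono hpoint
    _ = ∫⁻ t, ∫⁻ x, ‖φ.normed μ t • g (x - t) - φ.normed μ t • g x‖ₑ ∂μ ∂μ :=
        lintegral_lintegral_swap hmeas
    _ ≤ ∫⁻ t, ‖φ.normed μ t‖ₑ * ε ∂μ := by
        refine lintegral_mono fun t ↦ ?_
        simp only [← smul_sub, enorm_smul]
        rw [lintegral_const_mul' _ _ enorm_ne_top]
        by_cases ht : t ∈ ball (0 : V) φ.rOut
        · gcongr
          exact hε t ht
        · rw [← φ.support_normed_eq (μ := μ), Function.notMem_support] at ht
          simp [ht]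
    _ = ε := by
        rw [lintegral_mul_const _ φ.continuous_normed.measurable.enorm]
        simp only [Real.enorm_eq_ofReal (φ.nonneg_normed _)]
        rw [← ofReal_integral_eq_lintegral_ofReal φ.integrable_normed
          (ae_of_all _ φ.nonneg_normed), φ.integral_normed, ENNReal.ofReal_one, one_mul]

lemma tendsto_lintegral_enorm_normed_convolution_sub {ι : Type*} {l : Filter ι}
    {φ : ι → ContDiffBump (0 : V)} {g : V → E} (hφ : Tendsto (fun i ↦ (φ i).rOut) l (𝓝 0))
    (hg : Integrable g μ) :
    Tendsto (fun i ↦ ∫⁻ x, ‖((φ i).normed μ ⋆[lsmul ℝ ℝ, μ] g) x - g x‖ₑ ∂μ) l (𝓝 0) := by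
  refine ENNReal.tendsto_nhds_zero.2 fun ε hε ↦ ?_
  obtain ⟨δ, hδ, hball⟩ := Metric.eventually_nhds_iff_ball.1
    (ENNReal.tendsto_nhds_zero.1 (tendsto_lintegral_enorm_comp_sub_sub hg) ε hε)
  filter_upwards [hφ.eventually_lt_const hδ] with i hi
  exact lintegral_enorm_normed_convolution_sub_le (φ i) hg
    fun t ht ↦ hball t (ball_subset_ball hi.le ht)

end Mollification

lemma exists_seq_contDiffBump_rOut_tendsto_zero {V : Type*} [NormedAddCommGroup V] (c : V)
    {R : ℝ} (hR : 0 < R) :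
    ∃ φ : ℕ → ContDiffBump c, (∀ j, (φ j).rOut < R) ∧
      Tendsto (fun j ↦ (φ j).rOut) atTop (𝓝 0) := by
  obtain ⟨u, -, hu, hlim⟩ := exists_seq_strictAnti_tendsto' hR
  exact ⟨fun j ↦ ⟨u j / 2, u j, half_pos (hu j).1, half_lt_self (hu j).1⟩, fun j ↦ (hu j).2, hlim⟩

namespace IsWeakDerivOn

open ContinuousLinearMap (lsmul)
open scoped Convolution

variable {n m : ℕ} {U K : Set (Eucl n)} {f : Eucl n → Eucl m} {Df D : Eucl n → Eucl n →L[ℝ] Eucl m}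

lemma fderiv_convolution_indicator (hw : IsWeakDerivOn U f Df) (hK : IsCompact K) (hKU : K ⊆ U)
    (hD : Integrable D) (hDf : K.indicator Df =ᵐ[volume] D) {k : Eucl n → ℝ}
    (hk : HasCompactSupport k) (hk' : ContDiff ℝ (⊤ : ℕ∞) k) {x : Eucl n}
    (hx : tsupport (fun y ↦ k (x - y)) ⊆ K) :
    fderiv ℝ (k ⋆[lsmul ℝ ℝ, volume] K.indicator f) x = (k ⋆[lsmul ℝ ℝ, volume] D) x := by
  have hf : Integrable (K.indicator f) :=
    (integrable_indicator_iff hK.measurableSet).2 (hw.1.integrableOn_compact_subset hKU hK)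
  refine fderiv_convolution_eq_of_weak hk (hk'.of_le (by simp)) hf.locallyIntegrable
    hD.locallyIntegrable fun v ↦ ?_
  calc ∫ y, k (x - y) • D y v = ∫ y, k (x - y) • Df y v := by
        refine integral_congr_ae ?_
        filter_upwards [hDf] with y hy
        by_cases hyK : y ∈ K
        · rw [← hy, indicator_of_mem hyK]
        · simp [image_eq_zero_of_notMem_tsupport fun h ↦ hyK (hx h)]
    _ = -∫ y, fderiv ℝ (fun z ↦ k (x - z)) y v • f y :=
        hw.2.2 _ (hk'.comp (contDiff_const.sub contDiff_id))
          (hK.of_isClosed_subset (isClosed_tsupport _) hx) (hx.trans hKU) v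
    _ = -∫ y, fderiv ℝ (fun z ↦ k (x - z)) y v • K.indicator f y := by
        congr 2 with y
        by_cases hyK : y ∈ K
        · rw [indicator_of_mem hyK]
        · simp [image_eq_zero_of_notMem_tsupport fun h ↦ hyK (hx (tsupport_fderiv_subset ℝ h))]

lemma exists_hasApproxFDerivOn_ball (hw : IsWeakDerivOn U f Df) (hf : ContinuousOn f U)
    {x₁ : Eucl n} {R : ℝ} (hR : 0 < R) (hU : closedBall x₁ (2 * R) ⊆ U) :
    ∃ D : Eucl n → Eucl n →L[ℝ] Eucl m, StronglyMeasurable D ∧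
      D =ᵐ[volume.restrict (ball x₁ R)] Df ∧ HasApproxFDerivOn volume (ball x₁ R) f D := by
  set K := closedBall x₁ (2 * R)
  have hK : IsCompact K := isCompact_closedBall _ _
  have hball : ball x₁ R ⊆ interior K :=
    (ball_subset_ball (by linarith)).trans ball_subset_interior_closedBall
  have hfK : Integrable (K.indicator f) :=
    (integrable_indicator_iff hK.measurableSet).2 (hw.1.integrableOn_compact_subset hU hK)
  have hDfK : Integrable (K.indicator Df) :=
    (integrable_indicator_iff hK.measurableSet (f := Df)).2
      (hw.2.1.integrableOn_compact_subset hU hK)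
  obtain ⟨D, hDmeas, hDf⟩ := hDfK.1
  have hD : Integrable D := hDfK.congr hDf
  obtain ⟨φ, hφR, hφ⟩ := exists_seq_contDiffBump_rOut_tendsto_zero (0 : Eucl n) hR
  refine ⟨D, hDmeas, ?_, fun j ↦ (φ j).normed volume ⋆[lsmul ℝ ℝ, volume] K.indicator f,
    fun j ↦ ?_, fun x hx ↦ ?_, ?_⟩
  · filter_upwards [ae_restrict_of_ae hDf, ae_restrict_mem measurableSet_ball] with x hxD hx
    rw [← hxD, indicator_of_mem (interior_subset (hball hx))]
  · exact ((φ j).hasCompactSupport_normed.contDiff_convolution_left (lsmul ℝ ℝ)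
      (φ j).contDiff_normed hfK.locallyIntegrable).contDiffOn
  · have hxK : K ∈ 𝓝 x := mem_interior_iff_mem_nhds.1 (hball hx)
    have hcont : ContinuousAt (K.indicator f) x :=
      ((hf.mono hU).continuousAt hxK).congr (eqOn_indicator.symm.eventuallyEq_of_mem hxK)
    have hlim := ContDiffBump.convolution_tendsto_right (μ := volume) (g := fun _ ↦ K.indicator f)
      hφ (Eventually.of_forall fun _ ↦ hfK.1) (hcont.tendsto.comp tendsto_snd) tendsto_const_nhds
    rwa [indicator_of_mem (mem_of_mem_nhds hxK)] at hlim
  · refine tendsto_of_tendsto_of_tendsto_of_le_of_le tendsto_const_nhds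
      (tendsto_lintegral_enorm_normed_convolution_sub hφ hD) (fun _ ↦ zero_le) fun j ↦ ?_
    refine (setLIntegral_congr_fun measurableSet_ball fun x hx ↦ ?_).trans_le
      (setLIntegral_le_lintegral (ball x₁ R) _)
    simp only
    rw [hw.fderiv_convolution_indicator hK hU hD hDf (φ j).hasCompactSupport_normed
      (φ j).contDiff_normed]
    refine closure_minimal (fun y hy ↦ ?_) isClosed_closedBall
    have hxy : x - y ∈ ball (0 : Eucl n) (φ j).rOut :=
      (φ j).support_normed_eq (μ := volume) ▸ hy
    rw [mem_ball_zero_iff, ← dist_eq_norm, dist_comm] at hxy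
    rw [mem_closedBall]
    linarith [dist_triangle y x x₁, mem_ball.1 hx, hφR j]

end IsWeakDerivOn

/-! ### Absolute continuity and slicing -/

section AbsolutelyContinuous

variable {n m : ℕ} {f : Eucl n → Eucl m} {S T : Set (Eucl n)} {d : ℝ}

theorem acOnSet_of_hausdorffMeasure_image_le {α : Type*} [MeasurableSpace α] {ν : Measure α}
    {P : α → Eucl n} {h : α → ℝ≥0∞} {C c : ℝ≥0∞} (hC : C ≠ ⊤) (hc : c ≠ ⊤)
    (hh : ∫⁻ u, h u ∂ν ≠ ⊤) (hf : ∀ A ⊆ S, μH[d] (f '' A) ≤ C * ∫⁻ u in P ⁻¹' A, h u ∂ν)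
    (hP : ∀ A ⊆ S, ν (P ⁻¹' A) ≤ c * μH[d] A) : ACOnSet f S d := by
  intro ε hε
  have hCh : ∫⁻ u, C * h u ∂ν ≠ ⊤ := by
    rw [lintegral_const_mul' _ _ hC]
    exact ENNReal.mul_ne_top hC hh
  obtain ⟨δ, hδ, hsmall⟩ :=
    exists_pos_setLIntegral_lt_of_measure_lt hCh (ENNReal.ofReal_pos.2 hε).ne'
  obtain ⟨η, hη, hηδ⟩ := ENNReal.exists_nnreal_pos_mul_lt hc hδ.ne'
  refine ⟨η, hη, fun A hA hAη ↦ ?_⟩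
  rw [ENNReal.ofReal_coe_nnreal] at hAη
  calc μH[d] (f '' A) ≤ C * ∫⁻ u in P ⁻¹' A, h u ∂ν := hf A hA
    _ = ∫⁻ u in P ⁻¹' A, C * h u ∂ν := (lintegral_const_mul' _ _ hC).symm
    _ < ENNReal.ofReal ε := hsmall _ <| (hP A hA).trans_lt <| by
        rw [mul_comm]
        exact (mul_le_mul_left hAη.le c).trans_lt hηδ

theorem ACOnSet.mono (hf : ACOnSet f S d) (hTS : T ⊆ S) : ACOnSet f T d := fun ε hε ↦
  (hf ε hε).imp fun _ hδ ↦ ⟨hδ.1, fun A hA ↦ hδ.2 A (hA.trans hTS)⟩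

theorem ACOnSet.hausdorffMeasure_image_eq_zero (hf : ACOnSet f S d) {A : Set (Eucl n)} (hA : A ⊆ S)
    (hA0 : μH[d] A = 0) : μH[d] (f '' A) = 0 := by
  refine nonpos_iff_eq_zero.1 <| ENNReal.le_of_forall_pos_le_add fun ε hε _ ↦ ?_
  obtain ⟨δ, hδ, hfA⟩ := hf ε hε
  simpa using (hfA A hA (by simpa [hA0] using hδ)).le

end AbsolutelyContinuous

section Antilipschitz

variable {V Y : Type*} [NormedAddCommGroup V] [NormedSpace ℝ V] [FiniteDimensional ℝ V]
  [MeasurableSpace V] [BorelSpace V] [MetricSpace Y] [MeasurableSpace Y] [BorelSpace Y]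

theorem exists_measure_preimage_inter_le (μ : Measure V) [μ.IsAddHaarMeasure] {P : V → Y}
    {T : Set V} {κ : ℝ≥0} (hP : AntilipschitzWith κ (T.domRestrict P)) :
    ∃ c : ℝ≥0, ∀ A, μ (P ⁻¹' A ∩ T) ≤ c * μH[Module.finrank ℝ V] A := by
  set k := Module.finrank ℝ V
  refine ⟨μ.addHaarScalarFactor μH[k] * κ ^ k, fun A ↦ ?_⟩
  have hHaar : μH[k] (P ⁻¹' A ∩ T) ≤ κ ^ (k : ℝ) * μH[k] A := by
    rw [inter_comm, ← Subtype.image_preimage_coe,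
      isometry_subtype_coe.hausdorffMeasure_image (.inl k.cast_nonneg)]
    exact hP.hausdorffMeasure_preimage_le k.cast_nonneg A
  calc μ (P ⁻¹' A ∩ T) = μ.addHaarScalarFactor μH[k] * μH[k] (P ⁻¹' A ∩ T) := by
        conv_lhs => rw [Measure.isAddLeftInvariant_eq_smul μ μH[k]]
        rfl
    _ ≤ μ.addHaarScalarFactor μH[k] * (κ ^ (k : ℝ) * μH[k] A) := mul_le_mul_right hHaar _
    _ = _ := by push_cast; rw [ENNReal.rpow_natCast, mul_assoc]

theorem exists_map_restrict_le_smul_restrict {W : Type*} [NormedAddCommGroup W] [NormedSpace ℝ W]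
    [FiniteDimensional ℝ W] [MeasurableSpace W] [BorelSpace W] (μ : Measure V)
    [μ.IsAddHaarMeasure] (ν : Measure W) [ν.IsAddHaarMeasure] {P : V → W} (hPm : Measurable P)
    {T : Set V} {B : Set W} (hTB : MapsTo P T B) {κ : ℝ≥0}
    (hP : AntilipschitzWith κ (T.domRestrict P))
    (hdim : Module.finrank ℝ V = Module.finrank ℝ W) :
    ∃ c : ℝ≥0, (μ.restrict T).map P ≤ c • ν.restrict B := by
  obtain ⟨c, hc⟩ := exists_measure_preimage_inter_le μ hP
  refine ⟨c * Measure.addHaarScalarFactor μH[Module.finrank ℝ W] ν,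
    Measure.le_iff.2 fun A hA ↦ ?_⟩
  have hAB : P ⁻¹' A ∩ T ⊆ P ⁻¹' (A ∩ B) ∩ T := fun x hx ↦ ⟨⟨hx.1, hTB hx.2⟩, hx.2⟩
  rw [Measure.map_apply hPm hA, Measure.restrict_apply (hPm hA), mul_smul, ← Measure.restrict_smul]
  refine (measure_mono hAB).trans ((hc _).trans_eq ?_)
  rw [hdim]
  conv_lhs => rw [Measure.isAddLeftInvariant_eq_smul μH[Module.finrank ℝ W] ν]
  rw [← Measure.restrict_apply hA]
  rfl

end Antilipschitz

section Slicing

variable {α β X : Type*} [MeasurableSpace α] [MeasurableSpace β] [MeasurableSpace X]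
  {μ : Measure α} {ν : Measure β} {ρ : Measure X} {Φ : α × β → X} {c : ℝ≥0}

theorem exists_strictMono_ae_tendsto_of_tendsto_lintegral {H : ℕ → α → ℝ≥0∞}
    (hH : ∀ j, AEMeasurable (H j) μ) (hlim : Tendsto (fun j ↦ ∫⁻ x, H j x ∂μ) atTop (𝓝 0)) :
    ∃ s : ℕ → ℕ, StrictMono s ∧ ∀ᵐ x ∂μ, Tendsto (fun i ↦ H (s i) x) atTop (𝓝 0) := by
  obtain ⟨s, hs, hsle⟩ := extraction_forall_of_eventually fun i : ℕ ↦
    ENNReal.tendsto_nhds_zero.1 hlim (2⁻¹ ^ i) (by simp [pos_iff_ne_zero])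
  have hsum : ∫⁻ x, ∑' i, H (s i) x ∂μ ≠ ⊤ := by
    rw [lintegral_tsum fun i ↦ hH (s i)]
    refine ne_top_of_le_ne_top ?_ (ENNReal.tsum_le_tsum hsle)
    simp [ENNReal.tsum_geometric]
  exact ⟨s, hs, (ae_lt_top' (AEMeasurable.tsum fun i ↦ hH (s i)) hsum).mono
    fun x hx ↦ ENNReal.tendsto_atTop_zero_of_tsum_ne_top hx.ne⟩

theorem lintegral_comp_le_of_map_le {κ : Measure α} {P : α → X} (hPm : Measurable P)
    (hP : κ.map P ≤ c • ρ) {h : X → ℝ≥0∞} (hh : AEMeasurable h ρ) :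
    ∫⁻ p, h (P p) ∂κ ≤ c * ∫⁻ x, h x ∂ρ := by
  have hac : κ.map P ≪ ρ :=
    (Measure.absolutelyContinuous_of_le hP).trans Measure.smul_absolutelyContinuous
  rw [← lintegral_map' (hh.mono_ac hac) hPm.aemeasurable]
  exact (lintegral_mono' hP le_rfl).trans_eq (lintegral_smul_measure _ _)

variable [SFinite ν]

theorem ae_ae_comp_of_map_prod_le (hΦm : Measurable Φ) (hΦ : (μ.prod ν).map Φ ≤ c • ρ)
    {p : X → Prop} (hp : ∀ᵐ x ∂ρ, p x) : ∀ᵐ r ∂μ, ∀ᵐ u ∂ν, p (Φ (r, u)) := by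
  have hac : (μ.prod ν).map Φ ≪ ρ :=
    (Measure.absolutelyContinuous_of_le hΦ).trans Measure.smul_absolutelyContinuous
  exact Measure.ae_ae_of_ae_prod (ae_of_ae_map hΦm.aemeasurable (hac.ae_le hp))

theorem ae_lintegral_slice_ne_top (hΦm : Measurable Φ) (hΦ : (μ.prod ν).map Φ ≤ c • ρ)
    {h : X → ℝ≥0∞} (hh : Measurable h) (hfin : ∫⁻ x, h x ∂ρ ≠ ⊤) :
    ∀ᵐ r ∂μ, ∫⁻ u, h (Φ (r, u)) ∂ν ≠ ⊤ := by
  have hle := lintegral_comp_le_of_map_le hΦm hΦ hh.aemeasurable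
  have hhΦ : AEMeasurable (fun p ↦ h (Φ p)) (μ.prod ν) := (hh.comp hΦm).aemeasurable
  rw [lintegral_prod _ hhΦ] at hle
  exact (ae_lt_top' hhΦ.lintegral_prod_right' (hle.trans_lt (by finiteness)).ne).mono
    fun _ ↦ LT.lt.ne

theorem exists_strictMono_ae_tendsto_lintegral_slice (hΦm : Measurable Φ)
    (hΦ : (μ.prod ν).map Φ ≤ c • ρ) {h : ℕ → X → ℝ≥0∞} (hh : ∀ j, AEMeasurable (h j) ρ)
    (hlim : Tendsto (fun j ↦ ∫⁻ x, h j x ∂ρ) atTop (𝓝 0)) :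
    ∃ s : ℕ → ℕ, StrictMono s ∧
      ∀ᵐ r ∂μ, Tendsto (fun i ↦ ∫⁻ u, h (s i) (Φ (r, u)) ∂ν) atTop (𝓝 0) := by
  have hac : (μ.prod ν).map Φ ≪ ρ :=
    (Measure.absolutelyContinuous_of_le hΦ).trans Measure.smul_absolutelyContinuous
  have hhΦ (j : ℕ) : AEMeasurable (fun p ↦ h j (Φ p)) (μ.prod ν) :=
    ((hh j).mono_ac hac).comp_measurable hΦm
  refine exists_strictMono_ae_tendsto_of_tendsto_lintegral
    (fun j ↦ (hhΦ j).lintegral_prod_right') ?_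
  have hbound : Tendsto (fun j ↦ c * ∫⁻ x, h j x ∂ρ) atTop (𝓝 0) := by
    simpa using ENNReal.Tendsto.const_mul (a := (c : ℝ≥0∞)) hlim (.inr ENNReal.coe_ne_top)
  refine tendsto_of_tendsto_of_tendsto_of_le_of_le tendsto_const_nhds hbound (fun _ ↦ zero_le)
    fun j ↦ ?_
  rw [← lintegral_prod _ (hhΦ j)]
  exact lintegral_comp_le_of_map_le hΦm hΦ (hh j)

end Slicing

section SliceDerivative

variable {α V W E : Type*} [NormedAddCommGroup V] [NormedSpace ℝ V] [NormedAddCommGroup W]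
  [NormedSpace ℝ W] [NormedAddCommGroup E] [NormedSpace ℝ E] {L : ℝ≥0}

theorem enorm_fderiv_comp_sub_comp_le {G : V → E} {P : W → V} {u : W}
    (hG : DifferentiableAt ℝ G (P u)) (hP : DifferentiableAt ℝ P u) (hPL : ‖fderiv ℝ P u‖₊ ≤ L)
    (A : V →L[ℝ] E) :
    ‖fderiv ℝ (fun w ↦ G (P w)) u - A.comp (fderiv ℝ P u)‖ₑ ≤ L * ‖fderiv ℝ G (P u) - A‖ₑ := by
  rw [show fderiv ℝ (fun w ↦ G (P w)) u = _ from fderiv_comp u hG hP,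
    ← ContinuousLinearMap.sub_comp]
  simp only [enorm_eq_nnnorm]
  rw [mul_comm]
  exact_mod_cast (ContinuousLinearMap.opNNNorm_comp_le _ _).trans (mul_le_mul_right hPL _)

variable [MeasurableSpace α] [FiniteDimensional ℝ V] [MeasurableSpace V] [BorelSpace V]
  [MeasurableSpace W] [BorelSpace W] {μ : Measure α} {ν : Measure W} [SFinite ν] {ρ : Measure V}
  {B : Set V} {Q : Set W} {c : ℝ≥0} {f : V → E} {D : V → V →L[ℝ] E}

theorem HasApproxFDerivOn.ae_slice (hf : HasApproxFDerivOn ρ B f D) (hD : StronglyMeasurable D)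
    (hB : IsOpen B) (hQ : IsOpen Q) {Φ : α × W → V} (hΦm : Measurable Φ)
    (hΦ : (μ.prod (ν.restrict Q)).map Φ ≤ c • ρ.restrict B)
    (hΦB : ∀ᵐ r ∂μ, MapsTo (fun u ↦ Φ (r, u)) Q B)
    (hΦd : ∀ᵐ r ∂μ, ContDiffOn ℝ 1 (fun u ↦ Φ (r, u)) Q)
    (hΦL : ∀ᵐ r ∂μ, LipschitzOnWith L (fun u ↦ Φ (r, u)) Q) :
    ∀ᵐ r ∂μ, HasApproxFDerivOn ν Q (fun u ↦ f (Φ (r, u)))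
      fun u ↦ (D (Φ (r, u))).comp (fderiv ℝ (fun w ↦ Φ (r, w)) u) := by
  obtain ⟨G, hG, hGf, hGD⟩ := hf
  have hmeas (j : ℕ) : AEMeasurable (fun x ↦ ‖fderiv ℝ (G j) x - D x‖ₑ) (ρ.restrict B) :=
    ((((hG j).continuousOn_fderiv_of_isOpen hB le_rfl).aestronglyMeasurable
      hB.measurableSet).sub hD.aestronglyMeasurable).enorm
  obtain ⟨s, hs, hlim⟩ := exists_strictMono_ae_tendsto_lintegral_slice hΦm hΦ hmeas hGD
  filter_upwards [hlim, hΦB, hΦd, hΦL] with r hr hrB hrd hrL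
  refine ⟨fun i u ↦ G (s i) (Φ (r, u)), fun i ↦ (hG (s i)).comp hrd hrB,
    fun u hu ↦ (hGf _ (hrB hu)).comp hs.tendsto_atTop, ?_⟩
  have hbound : Tendsto (fun i ↦ L * ∫⁻ u in Q, ‖fderiv ℝ (G (s i)) (Φ (r, u)) - D (Φ (r, u))‖ₑ ∂ν)
      atTop (𝓝 0) := by
    simpa using ENNReal.Tendsto.const_mul (a := (L : ℝ≥0∞)) hr (.inr ENNReal.coe_ne_top)
  refine tendsto_of_tendsto_of_tendsto_of_le_of_le tendsto_const_nhds hbound (fun _ ↦ zero_le)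
    fun i ↦ ?_
  rw [← lintegral_const_mul' _ _ ENNReal.coe_ne_top]
  refine setLIntegral_mono' hQ.measurableSet fun u hu ↦ ?_
  exact enorm_fderiv_comp_sub_comp_le (P := fun w ↦ Φ (r, w))
    (((hG (s i)).contDiffAt (hB.mem_nhds (hrB hu))).differentiableAt one_ne_zero)
    ((hrd.contDiffAt (hQ.mem_nhds hu)).differentiableAt one_ne_zero)
    (norm_fderiv_le_of_lipschitzOn ℝ (hQ.mem_nhds hu) hrL) _

end SliceDerivative

/-! ### Gnomonic polar coordinates -/

section Gnomonic

variable {V : Type*} [NormedAddCommGroup V] [InnerProductSpace ℝ V] {x₀ x₁ e x : V}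

/-- Polar coordinates about `x₀` in which the half sphere centred at `x₀` facing the direction `e`
is parametrized by the hyperplane orthogonal to `e`, through the central projection of the affine
hyperplane at `e`. -/
noncomputable def gnomonicMap (x₀ e : V) (p : ℝ × (ℝ ∙ e)ᗮ) : V :=
  x₀ + (p.1 * ‖e + p.2‖⁻¹) • (e + p.2)

/-- The inverse of `gnomonicMap` on the half space `0 < ⟪e, x - x₀⟫`. -/
noncomputable def gnomonicCoord (x₀ e x : V) : ℝ × (ℝ ∙ e)ᗮ :=
  (‖x - x₀‖, (ℝ ∙ e)ᗮ.orthogonalProjectionOnto ((‖e‖ ^ 2 / ⟪e, x - x₀⟫) • (x - x₀)))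

theorem inner_add_orthogonal_span_singleton (w : (ℝ ∙ e)ᗮ) : ⟪e, e + w⟫ = ‖e‖ ^ 2 := by
  rw [inner_add_right, real_inner_self_eq_norm_sq,
    Submodule.mem_orthogonal_singleton_iff_inner_right.1 w.2, add_zero]

theorem add_orthogonal_span_singleton_ne_zero (he : e ≠ 0) (w : (ℝ ∙ e)ᗮ) : e + w ≠ 0 := by
  intro h
  have hinner := inner_add_orthogonal_span_singleton w
  rw [h, inner_zero_right] at hinner
  exact he (norm_eq_zero.1 (pow_eq_zero_iff two_ne_zero |>.1 hinner.symm))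

theorem contDiff_gnomonicMap (he : e ≠ 0) : ContDiff ℝ 1 (gnomonicMap x₀ e) := by
  have hsum : ContDiff ℝ 1 fun p : ℝ × (ℝ ∙ e)ᗮ ↦ e + (p.2 : V) :=
    contDiff_const.add ((ℝ ∙ e)ᗮ.subtypeL.contDiff.comp contDiff_snd)
  have hne (p : ℝ × (ℝ ∙ e)ᗮ) := add_orthogonal_span_singleton_ne_zero he p.2
  exact contDiff_const.add <| (contDiff_fst.mul <|
    (hsum.norm ℝ hne).inv fun p ↦ norm_ne_zero_iff.2 (hne p)).smul hsum

theorem norm_gnomonicMap_sub (he : e ≠ 0) {r : ℝ} (hr : 0 ≤ r) (w : (ℝ ∙ e)ᗮ) :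
    ‖gnomonicMap x₀ e (r, w) - x₀‖ = r := by
  have hne := norm_ne_zero_iff.2 (add_orthogonal_span_singleton_ne_zero he w)
  rw [gnomonicMap, add_sub_cancel_left, norm_smul, Real.norm_of_nonneg (by positivity)]
  field_simp

theorem gnomonicMap_norm_zero (he : e ≠ 0) : gnomonicMap x₀ e (‖e‖, 0) = x₀ + e := by
  simp [gnomonicMap, mul_inv_cancel₀ (norm_ne_zero_iff.2 he)]

theorem gnomonicCoord_gnomonicMap (he : e ≠ 0) {r : ℝ} (hr : 0 < r) (w : (ℝ ∙ e)ᗮ) :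
    gnomonicCoord x₀ e (gnomonicMap x₀ e (r, w)) = (r, w) := by
  have hne := norm_ne_zero_iff.2 (add_orthogonal_span_singleton_ne_zero he w)
  have he' := norm_ne_zero_iff.2 he
  have hscale : (‖e‖ ^ 2 / ⟪e, gnomonicMap x₀ e (r, w) - x₀⟫) •
      (gnomonicMap x₀ e (r, w) - x₀) = e + w := by
    rw [gnomonicMap, add_sub_cancel_left, inner_smul_right, inner_add_orthogonal_span_singleton,
      smul_smul]
    convert one_smul ℝ (e + (w : V)) using 2
    field_simp
  rw [gnomonicCoord, norm_gnomonicMap_sub he hr.le, hscale, map_add,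
    Submodule.orthogonalProjectionOnto_mem_subspace_eq_self,
    Submodule.orthogonalProjectionOnto_apply_of_mem_orthogonal
      (Submodule.le_orthogonal_orthogonal _ (Submodule.mem_span_singleton_self e)), zero_add]

theorem gnomonicMap_gnomonicCoord (hx : 0 < ⟪e, x - x₀⟫) :
    gnomonicMap x₀ e (gnomonicCoord x₀ e x) = x := by
  have he : ‖e‖ ≠ 0 := by
    rintro h
    simp [norm_eq_zero.1 h] at hx
  have hx0 : ‖x - x₀‖ ≠ 0 := by
    rintro h
    simp [norm_eq_zero.1 h] at hx
  set v := (‖e‖ ^ 2 / ⟪e, x - x₀⟫) • (x - x₀) with hv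
  have hproj : e + ((ℝ ∙ e)ᗮ.orthogonalProjectionOnto v : V) = v := by
    rw [← Submodule.starProjection_apply, Submodule.starProjection_orthogonal_val,
      Submodule.starProjection_singleton, hv, inner_smul_right, div_mul_cancel₀ _ hx.ne']
    simp [he]
  have hnorm : ‖v‖ = ‖e‖ ^ 2 / ⟪e, x - x₀⟫ * ‖x - x₀‖ := by
    rw [hv, norm_smul, Real.norm_of_nonneg (by positivity)]
  rw [gnomonicMap, gnomonicCoord, ← hv]
  simp only
  rw [hproj, hnorm, hv, smul_smul]
  convert add_sub_cancel x₀ x using 2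
  convert one_smul ℝ (x - x₀) using 2
  have := hx.ne'
  field_simp

theorem contDiffAt_gnomonicCoord (hx : 0 < ⟪e, x - x₀⟫) :
    ContDiffAt ℝ 1 (gnomonicCoord x₀ e) x := by
  have hx0 : x - x₀ ≠ 0 := fun h ↦ by simp [h] at hx
  have hsub : ContDiffAt ℝ 1 (fun y ↦ y - x₀) x := contDiffAt_id.sub contDiffAt_const
  refine (hsub.norm ℝ hx0).prodMk ?_
  exact (ℝ ∙ e)ᗮ.orthogonalProjectionOnto.contDiff.contDiffAt.comp x <|
    (contDiffAt_const.div (contDiffAt_const.inner ℝ hsub) hx.ne').smul hsub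

theorem exists_gnomonic_chart (hx : x₁ ≠ x₀) {B : Set V} (hB : B ∈ 𝓝 x₁) :
    ∃ (I : Set ℝ) (Q : Set (ℝ ∙ (x₁ - x₀))ᗮ) (L κ : ℝ≥0), IsOpen I ∧ IsOpen Q ∧
      MapsTo (gnomonicMap x₀ (x₁ - x₀)) (I ×ˢ Q) B ∧
      LipschitzOnWith L (gnomonicMap x₀ (x₁ - x₀)) (I ×ˢ Q) ∧
      AntilipschitzWith κ ((I ×ˢ Q).domRestrict (gnomonicMap x₀ (x₁ - x₀))) ∧
      ∀ᶠ x in 𝓝 x₁, gnomonicCoord x₀ (x₁ - x₀) x ∈ I ×ˢ Q ∧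
        gnomonicMap x₀ (x₁ - x₀) (gnomonicCoord x₀ (x₁ - x₀) x) = x := by
  set e := x₁ - x₀ with he_def
  have he : e ≠ 0 := sub_ne_zero.2 hx
  have hmap : gnomonicMap x₀ e (‖e‖, 0) = x₁ := by
    rw [gnomonicMap_norm_zero he, he_def, add_sub_cancel]
  have hcoord : gnomonicCoord x₀ e x₁ = (‖e‖, 0) := by
    rw [← hmap, gnomonicCoord_gnomonicMap he (norm_pos_iff.2 he)]
  have hinner : 0 < ⟪e, x₁ - x₀⟫ := real_inner_self_pos.2 he
  obtain ⟨κ, N, hN, hκ⟩ := (contDiffAt_gnomonicCoord hinner).exists_lipschitzOnWith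
  obtain ⟨L, M, hM, hL⟩ := (contDiff_gnomonicMap he).contDiffAt.exists_lipschitzOnWith
    (x := ((‖e‖, 0) : ℝ × (ℝ ∙ e)ᗮ)) (f := gnomonicMap x₀ e)
  have hgood : M ∩ gnomonicMap x₀ e ⁻¹' (N ∩ B) ∩ (Ioi 0 ×ˢ univ) ∈
      𝓝 ((‖e‖, 0) : ℝ × (ℝ ∙ e)ᗮ) := by
    refine inter_mem (inter_mem hM ?_) (prod_mem_nhds (Ioi_mem_nhds (norm_pos_iff.2 he)) univ_mem)
    exact (contDiff_gnomonicMap he).continuous.continuousAt.preimage_mem_nhds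
      (by rw [hmap]; exact inter_mem hN hB)
  obtain ⟨I, Q, hI, heI, hQ, h0Q, hIQ⟩ := mem_nhds_prod_iff'.1 hgood
  refine ⟨I, Q, L, κ, hI, hQ, fun p hp ↦ (hIQ hp).1.2.2, hL.mono fun p hp ↦ (hIQ hp).1.1, ?_, ?_⟩
  · have hinv (p) (hp : p ∈ I ×ˢ Q) : gnomonicCoord x₀ e (gnomonicMap x₀ e p) = p :=
      gnomonicCoord_gnomonicMap he (hIQ hp).2.1 p.2
    rintro ⟨p, hp⟩ ⟨q, hq⟩
    have hpq := hκ (hIQ hp).1.2.1 (hIQ hq).1.2.1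
    rwa [hinv p hp, hinv q hq] at hpq
  · refine ((contDiffAt_gnomonicCoord hinner).continuousAt.eventually_mem ?_).and ?_
    · exact hcoord ▸ prod_mem_nhds (hI.mem_nhds heI) (hQ.mem_nhds h0Q)
    · have hpos : ∀ᶠ x in 𝓝 x₁, 0 < ⟪e, x - x₀⟫ :=
        (by fun_prop : Continuous fun x ↦ ⟪e, x - x₀⟫).continuousAt.eventually (lt_mem_nhds hinner)
      exact hpos.mono fun x hx ↦ gnomonicMap_gnomonicCoord hx

end Gnomonic

/-! ### Regularity on almost every sphere -/

/-- The conjunction of the two properties of `f` on a piece `S` of a sphere, with Sobolev derivative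
`Df`, that pass from the pieces of a countable cover to the whole sphere: absolute continuity with
respect to `μH[d]`, and `μH[d] (f '' E) = 0` for every set `E ⊆ S` of critical points. -/
def IsRegularOn {n m : ℕ} (f : Eucl n → Eucl m) (Df : Eucl n → Eucl n →L[ℝ] Eucl m)
    (S : Set (Eucl n)) (d : ℝ) : Prop :=
  ACOnSet f S d ∧ ∀ E ⊆ S, (∀ x ∈ E, Df x = 0) → μH[d] (f '' E) = 0

theorem IsRegularOn.mono {n m : ℕ} {f : Eucl n → Eucl m} {Df : Eucl n → Eucl n →L[ℝ] Eucl m}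
    {S T : Set (Eucl n)} {d : ℝ} (hf : IsRegularOn f Df S d) (hTS : T ⊆ S) :
    IsRegularOn f Df T d :=
  ⟨hf.1.mono hTS, fun E hE ↦ hf.2 E (hE.trans hTS)⟩

theorem isRegularOn_empty {n m : ℕ} (f : Eucl n → Eucl m) (Df : Eucl n → Eucl n →L[ℝ] Eucl m)
    (d : ℝ) : IsRegularOn f Df ∅ d := by
  constructor
  · refine fun ε hε ↦ ⟨1, one_pos, fun A hA _ ↦ ?_⟩
    simpa [subset_empty_iff.1 hA] using hε
  · intro E hE _
    simp [subset_empty_iff.1 hE]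

section Parametrization

variable {W : Type*} [NormedAddCommGroup W] [NormedSpace ℝ W] [FiniteDimensional ℝ W]
  [MeasurableSpace W] [BorelSpace W] {ν : Measure W} [ν.IsAddHaarMeasure] {Q : Set W}
  {L κ : ℝ≥0} {ψ : ℝ → ℝ≥0∞}

theorem HasApproxFDerivOn.hausdorffMeasure_image_le_of_param {V E : Type*} [NormedAddCommGroup V]
    [NormedSpace ℝ V] [FiniteDimensional ℝ V] [MeasurableSpace V] [BorelSpace V]
    [NormedAddCommGroup E] [NormedSpace ℝ E] [CompleteSpace E] [MeasurableSpace E] [BorelSpace E]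
    {f : V → E} {D : V → V →L[ℝ] E} {P : W → V} {A : Set V} (hk : 1 < Module.finrank ℝ W)
    (hfP : HasApproxFDerivOn ν Q (fun u ↦ f (P u)) fun u ↦ (D (P u)).comp (fderiv ℝ P u))
    (hfc : ContinuousOn (fun u ↦ f (P u)) Q) (hD : StronglyMeasurable D) (hQ : IsOpen Q)
    (hP : Measurable P) (hPL : LipschitzOnWith L P Q) (hψ : Monotone ψ)
    (hψ_top : ∀ t, 0 < t → ψ t ≠ ⊤)
    (hint : ∫⁻ t in Ioi (0 : ℝ), (ENNReal.ofReal t / ψ t) ^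
      (1 / ((Module.finrank ℝ W : ℝ) - 1)) ≠ ⊤)
    (hfin : ∫⁻ u in Q, ψ ‖D (P u)‖ ∂ν ≠ ⊤) (hA : A ⊆ P '' Q) :
    μH[Module.finrank ℝ W] (f '' A) ≤
      imageConst ν L ψ * ∫⁻ u in P ⁻¹' A, ψ ‖D (P u)‖ ∂ν.restrict Q := by
  have hDP : StronglyMeasurable fun u ↦ D (P u) := hD.comp_measurable hP
  have hDPd : StronglyMeasurable fun u ↦ (D (P u)).comp (fderiv ℝ P u) :=
    (ContinuousLinearMap.compL ℝ W V E).continuous₂.comp_stronglyMeasurable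
      (hDP.prodMk (measurable_fderiv ℝ P).stronglyMeasurable)
  have hbound : ∀ u ∈ Q, ‖(D (P u)).comp (fderiv ℝ P u)‖ ≤ L * ‖D (P u)‖ := fun u hu ↦ by
    rw [mul_comm]
    exact ((D (P u)).opNorm_comp_le _).trans (mul_le_mul_of_nonneg_left
      (norm_fderiv_le_of_lipschitzOn ℝ (hQ.mem_nhds hu) hPL) (norm_nonneg _))
  have hsub : f '' A ⊆ (fun u ↦ f (P u)) '' (P ⁻¹' A ∩ Q) := by
    rintro _ ⟨x, hx, rfl⟩
    obtain ⟨u, hu, rfl⟩ := hA hx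
    exact ⟨u, ⟨hx, hu⟩, rfl⟩
  rw [Measure.restrict_restrict' hQ.measurableSet]
  exact (measure_mono hsub).trans <| hfP.hausdorffMeasure_image_le hk hDPd hfc hQ hDP hbound hψ
    hψ_top hint hfin inter_subset_right

theorem HasApproxFDerivOn.isRegularOn_of_param {n m : ℕ} {f : Eucl n → Eucl m}
    {D Df : Eucl n → Eucl n →L[ℝ] Eucl m} {P : W → Eucl n} {S : Set (Eucl n)}
    (hk : 1 < Module.finrank ℝ W)
    (hfP : HasApproxFDerivOn ν Q (fun u ↦ f (P u)) fun u ↦ (D (P u)).comp (fderiv ℝ P u))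
    (hfc : ContinuousOn (fun u ↦ f (P u)) Q) (hD : StronglyMeasurable D) (hQ : IsOpen Q)
    (hP : Measurable P) (hPL : LipschitzOnWith L P Q) (hPκ : AntilipschitzWith κ (Q.domRestrict P))
    (hDf : ∀ᵐ u ∂ν.restrict Q, D (P u) = Df (P u)) (hψ : Monotone ψ) (hψ_zero : ψ 0 = 0)
    (hψ_top : ∀ t, 0 < t → ψ t ≠ ⊤)
    (hint : ∫⁻ t in Ioi (0 : ℝ), (ENNReal.ofReal t / ψ t) ^
      (1 / ((Module.finrank ℝ W : ℝ) - 1)) ≠ ⊤)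
    (hfin : ∫⁻ u in Q, ψ ‖D (P u)‖ ∂ν ≠ ⊤) (hS : S ⊆ P '' Q) :
    IsRegularOn f Df S (Module.finrank ℝ W) := by
  have himage {A : Set (Eucl n)} (hA : A ⊆ S) := hfP.hausdorffMeasure_image_le_of_param hk hfc hD hQ
    hP hPL hψ hψ_top hint hfin (hA.trans hS)
  refine ⟨?_, fun E hE hcrit ↦ nonpos_iff_eq_zero.1 ((himage hE).trans_eq ?_)⟩
  · obtain ⟨c, hc⟩ := exists_measure_preimage_inter_le ν hPκ
    refine acOnSet_of_hausdorffMeasure_image_le (c := c) (imageConst_ne_top hk hint) (by simp) hfin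
      (fun A ↦ himage) fun A _ ↦ ?_
    rw [Measure.restrict_apply' hQ.measurableSet]
    exact hc A
  · have hDP : Measurable fun u ↦ D (P u) := hD.measurable.comp hP
    have hcritQ : P ⁻¹' E ≤ᵐ[ν.restrict Q] {u | D (P u) = 0} :=
      hDf.mono fun u hu huE ↦ hu.trans (hcrit _ huE)
    rw [mul_eq_zero]
    refine .inr (nonpos_iff_eq_zero.1 ((lintegral_mono_set' hcritQ).trans_eq ?_))
    refine setLIntegral_eq_zero (hDP (measurableSet_singleton 0)) fun u hu ↦ ?_
    rw [show D (P u) = 0 from hu, norm_zero, hψ_zero, Pi.zero_apply]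

theorem HasApproxFDerivOn.ae_isRegularOn_slice {n m : ℕ} {f : Eucl n → Eucl m}
    {D Df : Eucl n → Eucl n →L[ℝ] Eucl m} {B : Set (Eucl n)} {I : Set ℝ} {Φ : ℝ × W → Eucl n}
    (hf : HasApproxFDerivOn volume B f D) (hfc : ContinuousOn f B) (hD : StronglyMeasurable D)
    (hDf : D =ᵐ[volume.restrict B] Df) (hB : IsOpen B) (hI : IsOpen I) (hQ : IsOpen Q)
    (hk : 1 < Module.finrank ℝ W) (hdim : Module.finrank ℝ W + 1 = n) (hΦ : ContDiff ℝ 1 Φ)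
    (hΦB : MapsTo Φ (I ×ˢ Q) B) (hΦL : LipschitzOnWith L Φ (I ×ˢ Q))
    (hΦκ : AntilipschitzWith κ ((I ×ˢ Q).domRestrict Φ)) (hψ : Monotone ψ) (hψ_zero : ψ 0 = 0)
    (hψ_top : ∀ t, 0 < t → ψ t ≠ ⊤)
    (hint : ∫⁻ t in Ioi (0 : ℝ), (ENNReal.ofReal t / ψ t) ^
      (1 / ((Module.finrank ℝ W : ℝ) - 1)) ≠ ⊤)
    (hfin : ∫⁻ x in B, ψ ‖Df x‖ ≠ ⊤) :
    ∀ᵐ r ∂(volume : Measure ℝ).restrict I, ∀ S ⊆ (fun u ↦ Φ (r, u)) '' Q,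
      IsRegularOn f Df S (Module.finrank ℝ W) := by
  set ν : Measure W := Measure.addHaar
  have hmap (r : ℝ) (hr : r ∈ I) : MapsTo (fun u ↦ (r, u)) Q (I ×ˢ Q) := fun u hu ↦ ⟨hr, hu⟩
  have hslice (r : ℝ) : ContDiff ℝ 1 fun u ↦ Φ (r, u) := hΦ.comp (contDiff_prodMk_right r)
  have hsliceL (r : ℝ) (hr : r ∈ I) : LipschitzOnWith L (fun u ↦ Φ (r, u)) Q := by
    simpa [Function.comp_def] using
      hΦL.comp (LipschitzWith.prodMk_left r).lipschitzOnWith (hmap r hr)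
  have hΦm : Measurable Φ := hΦ.continuous.measurable
  obtain ⟨c, hc⟩ : ∃ c : ℝ≥0, ((volume.restrict I).prod (ν.restrict Q)).map Φ ≤
      c • volume.restrict B := by
    rw [Measure.prod_restrict]
    exact exists_map_restrict_le_smul_restrict _ _ hΦm hΦB hΦκ (by simp [add_comm, hdim])
  have hψD : Measurable fun x ↦ ψ ‖D x‖ := hψ.measurable.comp hD.norm.measurable
  have hfinD : ∫⁻ x in B, ψ ‖D x‖ ≠ ⊤ :=
    (lintegral_congr_ae (hDf.fun_comp fun A ↦ ψ ‖A‖)).trans_ne hfin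
  have hIae := ae_restrict_mem (μ := (volume : Measure ℝ)) hI.measurableSet
  filter_upwards [hIae, ae_lintegral_slice_ne_top hΦm hc hψD hfinD,
    ae_ae_comp_of_map_prod_le hΦm hc hDf,
    hf.ae_slice hD hB hQ hΦm hc (hIae.mono fun r hr ↦ hΦB.comp (hmap r hr))
      (.of_forall fun r ↦ (hslice r).contDiffOn) (hIae.mono hsliceL)] with r hr hrfin hrDf hrf S hS
  refine hrf.isRegularOn_of_param hk (hfc.comp (hslice r).continuous.continuousOn
    (hΦB.comp (hmap r hr))) hD hQ (hslice r).continuous.measurable (hsliceL r hr)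
    (κ := κ) (fun u v ↦ ?_) hrDf hψ hψ_zero hψ_top hint hrfin hS
  simpa [Subtype.edist_eq, Prod.edist_eq] using hΦκ ⟨(r, u), hr, u.2⟩ ⟨(r, v), hr, v.2⟩

end Parametrization

theorem HasApproxFDerivOn.exists_mem_nhds_ae_isRegularOn {n m : ℕ} (hn : 3 ≤ n)
    {f : Eucl n → Eucl m} {D Df : Eucl n → Eucl n →L[ℝ] Eucl m} {B : Set (Eucl n)}
    (hf : HasApproxFDerivOn volume B f D) (hfc : ContinuousOn f B) (hD : StronglyMeasurable D)
    (hDf : D =ᵐ[volume.restrict B] Df) (hB : IsOpen B) {x₀ x₁ : Eucl n} (hx : x₁ ≠ x₀)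
    (hx₁ : x₁ ∈ B) {ψ : ℝ → ℝ≥0∞} (hψ : Monotone ψ) (hψ_zero : ψ 0 = 0)
    (hψ_top : ∀ t, 0 < t → ψ t ≠ ⊤)
    (hint : ∫⁻ t in Ioi (0 : ℝ), (ENNReal.ofReal t / ψ t) ^ (1 / ((n : ℝ) - 2)) ≠ ⊤)
    (hfin : ∫⁻ x in B, ψ ‖Df x‖ ≠ ⊤) :
    ∃ N ∈ 𝓝 x₁, ∀ᵐ r : ℝ, IsRegularOn f Df (sphere x₀ r ∩ N) ((n : ℝ) - 1) := by
  obtain ⟨I, Q, L, κ, hI, hQ, hΦB, hΦL, hΦκ, hN⟩ := exists_gnomonic_chart hx (hB.mem_nhds hx₁)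
  have hdim : Module.finrank ℝ (ℝ ∙ (x₁ - x₀))ᗮ + 1 = n := by
    have := Submodule.finrank_add_finrank_orthogonal (ℝ ∙ (x₁ - x₀))
    rwa [finrank_span_singleton (sub_ne_zero.2 hx), finrank_euclideanSpace_fin, add_comm] at this
  have hdim' : (Module.finrank ℝ (ℝ ∙ (x₁ - x₀))ᗮ : ℝ) = n - 1 :=
    eq_sub_of_add_eq (mod_cast hdim)
  have hslice := hf.ae_isRegularOn_slice hfc hD hDf hB hI hQ (by omega) hdim
    (contDiff_gnomonicMap (sub_ne_zero.2 hx)) hΦB hΦL hΦκ hψ hψ_zero hψ_top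
    (by rwa [hdim', sub_sub, one_add_one_eq_two]) hfin
  rw [ae_restrict_iff' hI.measurableSet, hdim'] at hslice
  refine ⟨_, hN, hslice.mono fun r hr ↦ ?_⟩
  by_cases hrI : r ∈ I
  · refine hr hrI _ ?_
    rintro x ⟨hxr, hxQ, hxΦ⟩
    rw [mem_sphere_iff_norm] at hxr
    exact ⟨(gnomonicCoord x₀ (x₁ - x₀) x).2, hxQ.2, hxr ▸ hxΦ⟩
  · convert isRegularOn_empty f Df _
    refine eq_empty_of_forall_notMem fun x hx ↦ hrI ?_
    exact mem_sphere_iff_norm.1 hx.1 ▸ hx.2.1.1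

section OrliczSobolev

variable {n m : ℕ} {φ : ℝ → ℝ} {U : Set (Eucl n)} {f : Eucl n → Eucl m}
  {Df : Eucl n → Eucl n →L[ℝ] Eucl m}

theorem opNorm_le_frobNorm (A : Eucl n →L[ℝ] Eucl m) : ‖A‖ ≤ frobNorm A := by
  refine A.opNorm_le_bound (Real.sqrt_nonneg _) fun x ↦ ?_
  have hrow (i : Fin m) :
      A x i ^ 2 ≤ (∑ j, A (EuclideanSpace.single j 1) i ^ 2) * ∑ j, x j ^ 2 := by
    have hx : x = ∑ j, x j • EuclideanSpace.single j (1 : ℝ) := by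
      ext i
      simp [Pi.single_apply]
    have hAx : A x i = ∑ j, A (EuclideanSpace.single j 1) i * x j := by
      conv_lhs => rw [hx]
      simp [map_sum, mul_comm]
    exact hAx ▸ Finset.sum_mul_sq_le_sq_mul_sq _ _ _
  rw [frobNorm, EuclideanSpace.norm_eq, EuclideanSpace.norm_eq, ← Real.sqrt_mul (by positivity)]
  simp only [Real.norm_eq_abs, sq_abs]
  exact Real.sqrt_le_sqrt ((Finset.sum_le_sum fun i _ ↦ hrow i).trans_eq (Finset.sum_mul ..).symm)

theorem lintegral_truncWeight_norm_ne_top (hφ : NondecPos φ) {t₀ : ℝ} {K : Set (Eucl n)}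
    (hK : volume K ≠ ⊤) (hDf : ∫⁻ x in K, ENNReal.ofReal (φ (frobNorm (Df x))) ≠ ⊤) :
    ∫⁻ x in K, truncWeight φ t₀ ‖Df x‖ ≠ ⊤ := by
  refine ne_top_of_le_ne_top ?_ <| lintegral_mono fun x ↦
    (truncWeight_monotone hφ (opNorm_le_frobNorm (Df x))).trans (truncWeight_le_add _)
  rw [lintegral_add_right _ measurable_const, setLIntegral_const]
  finiteness

theorem exists_mem_nhds_ae_isRegularOn (hn : 3 ≤ n) (hU : IsOpen U) (hφ : NondecPos φ)
    (hcal : CalderonCond n φ) (hf_cont : ContinuousOn f U) (hf_sob : MemOrliczSobolevOn φ U f Df)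
    {x₀ x₁ : Eucl n} (hx : x₁ ≠ x₀) (hx₁ : x₁ ∈ U) :
    ∃ N ∈ 𝓝 x₁, ∀ᵐ r : ℝ, IsRegularOn f Df (sphere x₀ r ∩ N) ((n : ℝ) - 1) := by
  obtain ⟨t₀, ht₀, hint⟩ := hcal
  have hn2 : (0 : ℝ) < n - 2 := by
    have : (3 : ℝ) ≤ n := mod_cast hn
    linarith
  obtain ⟨R, hR, hRU⟩ : ∃ R > 0, closedBall x₁ (2 * R) ⊆ U := by
    obtain ⟨s, hs, hsU⟩ := nhds_basis_closedBall.mem_iff.1 (hU.mem_nhds hx₁)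
    exact ⟨s / 2, half_pos hs, by rwa [mul_div_cancel₀ s two_ne_zero]⟩
  have hball : ball x₁ R ⊆ closedBall x₁ (2 * R) :=
    ball_subset_closedBall.trans (closedBall_subset_closedBall (by linarith))
  obtain ⟨D, hD, hDf, hfD⟩ := hf_sob.1.exists_hasApproxFDerivOn_ball hf_cont hR hRU
  have hfin : ∫⁻ x in ball x₁ R, truncWeight φ t₀ ‖Df x‖ ≠ ⊤ :=
    lintegral_truncWeight_norm_ne_top hφ measure_ball_ne_top <| ne_top_of_le_ne_top
      (hf_sob.2 _ hRU (isCompact_closedBall _ _)).ne (lintegral_mono_set hball)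
  exact hfD.exists_mem_nhds_ae_isRegularOn hn (hf_cont.mono (hball.trans hRU)) hD hDf isOpen_ball
    hx (mem_ball_self hR) (truncWeight_monotone hφ) truncWeight_zero
    (fun t _ ↦ truncWeight_ne_top t)
    (lintegral_div_truncWeight_ne_top hφ ht₀ (one_div_pos.2 hn2) hint) hfin

theorem exists_countable_cover_ae_isRegularOn (hn : 3 ≤ n) (hU : IsOpen U) (hφ : NondecPos φ)
    (hcal : CalderonCond n φ) (hf_cont : ContinuousOn f U) (hf_sob : MemOrliczSobolevOn φ U f Df)
    (x₀ : Eucl n) :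
    ∃ 𝒩 : Set (Set (Eucl n)), 𝒩.Countable ∧ (∀ N ∈ 𝒩, IsOpen N) ∧ U \ {x₀} ⊆ ⋃₀ 𝒩 ∧
      ∀ᵐ r : ℝ, ∀ N ∈ 𝒩, IsRegularOn f Df (sphere x₀ r ∩ N) ((n : ℝ) - 1) := by
  choose! N hN hreg using fun x (hx : x ∈ U \ {x₀}) ↦
    exists_mem_nhds_ae_isRegularOn hn hU hφ hcal hf_cont hf_sob hx.2 hx.1
  obtain ⟨t, htU, ht, hcover⟩ := TopologicalSpace.countable_cover_nhdsWithin
    fun x hx ↦ mem_nhdsWithin_of_mem_nhds (interior_mem_nhds.2 (hN x hx))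
  refine ⟨(fun x ↦ interior (N x)) '' t, ht.image _, forall_mem_image.2 fun _ _ ↦ isOpen_interior,
    by rwa [sUnion_image], ?_⟩
  simp only [forall_mem_image]
  refine (ae_ball_iff ht).2 fun x hx ↦ (hreg x (htU hx)).mono fun r hr ↦ hr.mono ?_
  exact inter_subset_inter_right _ interior_subset

end OrliczSobolev

section Cover

variable {n m : ℕ} {f : Eucl n → Eucl m} {Df : Eucl n → Eucl n →L[ℝ] Eucl m} {S : Set (Eucl n)}
  {d : ℝ} {𝒩 : Set (Set (Eucl n))}

theorem hausdorffMeasure_image_eq_zero_of_cover (h𝒩 : 𝒩.Countable) {A : Set (Eucl n)}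
    (hA : A ⊆ ⋃₀ 𝒩) (h0 : ∀ N ∈ 𝒩, μH[d] (f '' (A ∩ N)) = 0) : μH[d] (f '' A) = 0 := by
  rw [← inter_eq_self_of_subset_left hA, sUnion_eq_biUnion, inter_iUnion₂, image_iUnion₂]
  exact (measure_biUnion_null_iff h𝒩).2 h0

theorem lusinNOn_of_isRegularOn_cover (h𝒩 : 𝒩.Countable) (hS : S ⊆ ⋃₀ 𝒩)
    (hreg : ∀ N ∈ 𝒩, IsRegularOn f Df (S ∩ N) d) : LusinNOn f S d := fun _ hA h0 ↦
  hausdorffMeasure_image_eq_zero_of_cover h𝒩 (hA.trans hS) fun N hN ↦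
    (hreg N hN).1.hausdorffMeasure_image_eq_zero (inter_subset_inter_left N hA)
      (measure_mono_null inter_subset_left h0)

theorem locACOnSet_of_isRegularOn_cover (hopen : ∀ N ∈ 𝒩, IsOpen N) (hS : S ⊆ ⋃₀ 𝒩)
    (hreg : ∀ N ∈ 𝒩, IsRegularOn f Df (S ∩ N) d) : LocACOnSet f S d := fun _ hx ↦
  let ⟨N, hN, hxN⟩ := hS hx
  ⟨N, (hopen N hN).mem_nhds hxN, (hreg N hN).1⟩

theorem hausdorffMeasure_image_critical_eq_zero_of_cover (h𝒩 : 𝒩.Countable) (hS : S ⊆ ⋃₀ 𝒩)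
    (hreg : ∀ N ∈ 𝒩, IsRegularOn f Df (S ∩ N) d) {E : Set (Eucl n)} (hE : E ⊆ S)
    (hcrit : ∀ x ∈ E, Df x = 0) : μH[d] (f '' E) = 0 :=
  hausdorffMeasure_image_eq_zero_of_cover h𝒩 (hE.trans hS) fun N hN ↦
    (hreg N hN).2 _ (inter_subset_inter_left N hE) fun x hx ↦ hcrit x hx.1

end Cover

/-- under the Calderón-type condition on `φ`, a continuous mapping of class
`W^{1,φ}_loc` has the (N)-property w.r.t. `H^{n-1}` on almost every sphere centered at a
prescribed point `x₀` (a.e. with respect to the radius), is locally absolutely continuous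
on almost all such spheres, and on almost all of them `H^{n-1}(f(E)) = 0` whenever
`|∇f| = 0` on `E`. -/
theorem stmt_2 (n m : ℕ) (hn : 3 ≤ n) (hm : 1 ≤ m)
    (U : Set (Eucl n)) (hU : IsOpen U)
    (φ : ℝ → ℝ) (hφ : NondecPos φ) (hcal : CalderonCond n φ)
    (f : Eucl n → Eucl m) (Df : Eucl n → Eucl n →L[ℝ] Eucl m)
    (hf_cont : ContinuousOn f U)
    (hf_sob : MemOrliczSobolevOn φ U f Df)
    (x₀ : Eucl n) :
    ∀ᵐ r ∂((volume : Measure ℝ).restrict (Ioi (0:ℝ))),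
      LusinNOn f (sphere x₀ r ∩ U) ((n : ℝ) - 1) ∧
      LocACOnSet f (sphere x₀ r ∩ U) ((n : ℝ) - 1) ∧
      ∀ E : Set (Eucl n), E ⊆ sphere x₀ r ∩ U →
        (∀ x ∈ E, frobNorm (Df x) = 0) →
        (μH[((n : ℝ) - 1)] : Measure (Eucl m)) (f '' E) = 0 := by
  obtain ⟨𝒩, h𝒩, hopen, hcover, hreg⟩ :=
    exists_countable_cover_ae_isRegularOn hn hU hφ hcal hf_cont hf_sob x₀
  filter_upwards [ae_restrict_of_ae hreg, ae_restrict_mem measurableSet_Ioi] with r hr hr0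
  have hS : sphere x₀ r ∩ U ⊆ ⋃₀ 𝒩 := fun x hx ↦
    hcover ⟨hx.2, ne_of_mem_sphere hx.1 (ne_of_gt hr0)⟩
  have hrS : ∀ N ∈ 𝒩, IsRegularOn f Df (sphere x₀ r ∩ U ∩ N) ((n : ℝ) - 1) := fun N hN ↦
    (hr N hN).mono (inter_subset_inter_left N inter_subset_left)
  refine ⟨lusinNOn_of_isRegularOn_cover h𝒩 hS hrS, locACOnSet_of_isRegularOn_cover hopen hS hrS,
    fun E hE hcrit ↦ hausdorffMeasure_image_critical_eq_zero_of_cover h𝒩 hS hrS hE fun x hx ↦ ?_⟩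
  exact norm_le_zero_iff.1 ((opNorm_le_frobNorm (Df x)).trans_eq (hcrit x hx))
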